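/- Let D be a bounded open subset of ℂⁿ equipped with a system of approach regions A, let A ⊂ D̄ be nonempty and locally pluriregular with ω(·, A, D) < 1 on D, let z₀ ∈ D and ε > 0. Then there exist a bounded holomorphic map φ : E → ℂⁿ and a measurable set Γ₀ ⊂ ∂E such that: every point of Γ₀ is a density point of Γ₀; φ(0) = z₀; φ(E) ⊂ D̄; the angular boundary value φ(ζ) exists and lies in Ā for all ζ ∈ Γ₀; and 1 − mes(Γ₀)/(2π) < ω(z₀, A, D) + ε. -/

import Mathlib

open Complex Metric Filter Set MeasureTheory
open scoped Topology Real Manifold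

noncomputable section

variable {H : Type*} [NormedAddCommGroup H] [NormedSpace ℂ H]
  {M : Type*} [TopologicalSpace M] [ChartedSpace H M]

/-- Plurisubharmonic real-valued function on a subset `D` of a complex
manifold `M`: upper semicontinuous and satisfying the sub-mean value
inequality along every holomorphic disc whose image stays in `D`. -/
def PSHOnM (u : M → ℝ) (D : Set M) : Prop :=
  UpperSemicontinuousOn u D ∧
  ∀ (φ : ℂ → M) (U : Set ℂ), IsOpen U →
    MDifferentiableOn 𝓘(ℂ, ℂ) 𝓘(ℂ, H) φ U →
    ∀ z r, 0 < r → closedBall z r ⊆ U → (∀ w ∈ closedBall z r, φ w ∈ D) →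
    u (φ z) ≤ (1 / (2 * Real.pi)) *
      ∫ θ in (0:ℝ)..(2 * Real.pi), u (φ (z + Complex.ofReal r * Complex.exp (θ * Complex.I)))

/-- The (unregularized) extremal function `h_{A,D}` on a manifold, relative to
the canonical system of approach regions. -/
def hFunM (A D : Set M) : M → ℝ := fun z =>
  sSup ((fun u : M → ℝ => u z) ''
    {u | PSHOnM (H := H) u D ∧ (∀ x ∈ D, u x ≤ 1) ∧
      ∀ a ∈ A, Filter.limsup u (𝓝[D] a) ≤ 0})

/-- The relative extremal function `ω(·, A, D)` on a manifold (canonical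
approach regions): the upper semicontinuous regularization of `h_{A,D}`. -/
def omegaM (A D : Set M) (z : M) : ℝ :=
  Filter.limsup (hFunM (H := H) A D) (𝓝[D] z)

/-- A holomorphic disc on `M`: a holomorphic map defined on a neighborhood of
the closed unit disc. -/
def IsHoloDisc (φ : ℂ → M) : Prop :=
  ∃ U : Set ℂ, IsOpen U ∧ closedBall (0:ℂ) 1 ⊆ U ∧
    MDifferentiableOn 𝓘(ℂ, ℂ) 𝓘(ℂ, H) φ U

/-- The Poisson functional `P[u]` of a function `u` on a manifold `M`. -/
def poissonFunctional (u : M → ℝ) (z : M) : ℝ :=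
  sInf ((fun φ : ℂ → M => (1 / (2 * Real.pi)) *
      ∫ θ in (0:ℝ)..(2 * Real.pi), u (φ (Complex.exp (θ * Complex.I)))) ''
    {φ | IsHoloDisc (H := H) φ ∧ φ 0 = z})

/-- The data of a system of approach regions: a family of subsets attached to
each point. -/
structure ApproachData (X : Type*) where
  regions : X → Set (Set X)

/-- The axioms for a system of approach regions for an open set `D`. -/
def IsApproachSystem {X : Type*} [TopologicalSpace X] (D : Set X)
    (𝒜 : ApproachData X) : Prop :=
  (∀ ζ ∈ closure D, (𝒜.regions ζ).Nonempty) ∧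
  (∀ ζ : X, ∀ A ∈ 𝒜.regions ζ, IsOpen A ∧ A ⊆ D) ∧
  (∀ ζ ∈ D, ∀ U : Set X, IsOpen U → ζ ∈ U → ∃ A ∈ 𝒜.regions ζ, ζ ∈ A ∧ A ⊆ U) ∧
  (∀ ζ ∈ frontier D, ∀ A ∈ 𝒜.regions ζ, ζ ∈ closure A)

/-- Restriction of a system of approach regions to an open set `U`. -/
def ApproachData.restrict {X : Type*} (𝒜 : ApproachData X) (U : Set X) :
    ApproachData X :=
  ⟨fun ζ => (· ∩ U) '' 𝒜.regions ζ⟩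

/-- The `𝒜`-limsup of a function at a point: the supremum over the approach
regions at that point of the limsup through the region. -/
def ALimsup {X : Type*} [TopologicalSpace X] (𝒜 : ApproachData X)
    (u : X → ℝ) (ζ : X) : ℝ :=
  sSup ((fun A : Set X => Filter.limsup u (𝓝[A] ζ)) '' 𝒜.regions ζ)

/-- The extremal function `h_{A,D}` relative to a system of approach
regions. -/
def hFunA (𝒜 : ApproachData M) (A D : Set M) : M → ℝ := fun z =>
  sSup ((fun u : M → ℝ => u z) ''
    {u | PSHOnM (H := H) u D ∧ (∀ x ∈ D, u x ≤ 1) ∧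
      ∀ a ∈ A, ALimsup 𝒜 u a ≤ 0})

/-- The relative extremal function `ω(·, A, D)` relative to a system of
approach regions (the `𝒜`-limsup regularization of `h_{A,D}`). -/
def omegaA (𝒜 : ApproachData M) (A D : Set M) (z : M) : ℝ :=
  ALimsup 𝒜 (hFunA (H := H) 𝒜 A D) z

/-- `A` is locally pluriregular at `a` relative to a system of approach
regions. -/
def PlrgAtA (𝒜 : ApproachData M) (A D : Set M) (a : M) : Prop :=
  ∀ U : Set M, IsOpen U → a ∈ U →
    omegaA (H := H) (𝒜.restrict U) (A ∩ U) (D ∩ U) a = 0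

/-- The set `A* = (A ∩ ∂D) ∪ {a ∈ Ā ∩ D : A locally pluriregular at a}`. -/
def AstarA (𝒜 : ApproachData M) (A D : Set M) : Set M :=
  (A ∩ frontier D) ∪ {a ∈ closure A ∩ D | PlrgAtA (H := H) 𝒜 A D a}

/-- The set `Ã`: the union of all locally pluriregular sets `P ⊆ D̄` with
`P̄ ⊆ A*`. -/
def AtildeA (𝒜 : ApproachData M) (A D : Set M) : Set M :=
  ⋃₀ {P : Set M | P ⊆ closure D ∧ (∀ p ∈ P, PlrgAtA (H := H) 𝒜 P D p) ∧
    closure P ⊆ AstarA (H := H) 𝒜 A D}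

/-- The plurisubharmonic measure `ω̃(·, A, D) = ω(·, Ã, D)`. -/
def omegaTildeA (𝒜 : ApproachData M) (A D : Set M) (z : M) : ℝ :=
  omegaA (H := H) 𝒜 (AtildeA (H := H) 𝒜 A D) D z

/-- The set of end-points of an open set `Ω ⊆ D × G` with respect to the
product of two systems of approach regions. -/
def EndPoints {X Y : Type*} [TopologicalSpace X] [TopologicalSpace Y]
    (𝒜 : ApproachData X) (ℬ : ApproachData Y) (Ω : Set (X × Y)) : Set (X × Y) :=
  {p | ∀ Aα ∈ 𝒜.regions p.1, ∀ Bβ ∈ ℬ.regions p.2,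
    ∃ U : Set X, ∃ V : Set Y, IsOpen U ∧ p.1 ∈ U ∧ IsOpen V ∧ p.2 ∈ V ∧
      (U ∩ Aα) ×ˢ (V ∩ Bβ) ⊆ Ω}

/-- The Stolz (angular) approach region of aperture `α` at a boundary point
`ζ` of the unit disc. -/
def stolzRegion (α : ℝ) (ζ : ℂ) : Set ℂ :=
  {t ∈ ball (0:ℂ) 1 | |Complex.arg ((ζ - t) / ζ)| < α}

/-!
Fix an open set `V` meeting `D`. The infimum, over the entire discs in `D` centred at `z`, of the
measure of the boundary angles sent outside `V` is a plurisubharmonic function of `z`: if, for `ζ`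
in disjoint compact subsets `K_j` of the circle, good discs `ψ(ζ) + φ_j` are attached to the
boundary of a disc `ψ`, then `ψ(ζ) + ∑ φ_j(c ζⁿ χ_j(ζ))`, with cut-off functions `χ_j` approximated
by Laurent polynomials, is for large `n` and suitable `c` a single disc which does as well as the
attached discs on average. This function vanishes on `V ∩ D`. Take for `V` the set of points near
`A` at which a localized extremal function of `A` is small; by local pluriregularity `V` contains
the germs of the approach regions at the points of `A`, so the function is bounded by the extremal
function of `A`.

The construction can be repeated: at the boundary values in `V` a localized extremal function is
small, so gluing small discs there brings them into a still smaller neighbourhood of `A` at a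
summable cost in measure, moving them by a summable distance. The discs converge locally uniformly
in the open unit disc, and their boundary values converge almost everywhere to values which, apart
from a set of small measure, lie in `closure A`. The Poisson formula passes to the limit, and
Fatou's theorem identifies the limits of the boundary values with the angular limits.
-/

section Circle

instance factTwoPiPos : Fact (0 < 2 * π) := ⟨Real.two_pi_pos⟩

/-- The circle of angles modulo `2π`, the parameter space of boundary values; its point `x` stands
for the boundary point `x.toCircle` of the unit disc. -/
abbrev Angles := AddCircle (2 * π)

/-- The normalized arc length of the circle of angles. -/
abbrev angleMeasure : Measure Angles := AddCircle.haarAddCircle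

lemma toCircle_coe_angle (θ : ℝ) : (AddCircle.toCircle (θ : Angles) : ℂ) = circleMap 0 1 θ := by
  rw [AddCircle.toCircle_apply_mk, Circle.coe_exp, div_self Real.two_pi_pos.ne', one_mul]
  simp only [circleMap, Complex.ofReal_one, one_mul, zero_add]

lemma exists_toCircle_eq {ζ : ℂ} (hζ : ‖ζ‖ = 1) : ∃ x : Angles, (x.toCircle : ℂ) = ζ := by
  refine ⟨((Complex.arg ζ : ℝ) : Angles), ?_⟩
  rw [toCircle_coe_angle, circleMap_zero, ← hζ, Complex.norm_mul_exp_arg_mul_I]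

lemma continuous_coe_toCircle : Continuous fun x : Angles => (x.toCircle : ℂ) :=
  continuous_subtype_val.comp AddCircle.continuous_toCircle

lemma toCircle_mem_closedBall (x : Angles) : (x.toCircle : ℂ) ∈ closedBall (0 : ℂ) 1 :=
  mem_closedBall_zero_iff.2 (Circle.norm_coe _).le

lemma norm_mul_toCircle_pow (w : ℂ) (x : Angles) (n : ℕ) :
    ‖w * (x.toCircle : ℂ) ^ n‖ = ‖w‖ := by
  rw [norm_mul, norm_pow, Circle.norm_coe, one_pow, mul_one]

lemma toCircle_nsmul_add (n : ℕ) (x t : Angles) :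
    ((n • x + t).toCircle : ℂ) = t.toCircle * (x.toCircle : ℂ) ^ n := by
  rw [AddCircle.toCircle_add, AddCircle.toCircle_nsmul, Circle.coe_mul, Circle.coe_pow, mul_comm]

lemma continuous_comp_toCircle {Y : Type*} [TopologicalSpace Y] {φ : ℂ → Y}
    (hφ : ContinuousOn φ (closedBall 0 1)) : Continuous fun x : Angles => φ x.toCircle :=
  hφ.comp_continuous continuous_coe_toCircle toCircle_mem_closedBall

end Circle

section UniformEstimates

variable {E F : Type*} [SeminormedAddCommGroup E] [SeminormedAddCommGroup F]

lemma exists_forall_norm_sub_lt_of_isCompact {φ : E → F} {K : Set E} (hK : IsCompact K)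
    (hφ : Continuous φ) {η : ℝ} (hη : 0 < η) :
    ∃ δ > 0, ∀ a ∈ K, ∀ b, ‖b - a‖ < δ → ‖φ b - φ a‖ < η := by
  have hunif := hK.uniformContinuousAt_of_continuousAt φ (fun a _ => hφ.continuousAt)
    (Metric.dist_mem_uniformity hη)
  obtain ⟨δ, hδ, h⟩ := Metric.mem_uniformity_dist.1 hunif
  refine ⟨δ, hδ, fun a ha b hab => ?_⟩
  rw [← dist_eq_norm, dist_comm] at hab ⊢
  exact h hab ha

lemma exists_forall_norm_sub_lt_imp_mem {K D : Set F} (hK : IsCompact K) (hD : IsOpen D)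
    (hKD : K ⊆ D) : ∃ η > 0, ∀ a ∈ K, ∀ b, ‖b - a‖ < η → b ∈ D := by
  obtain ⟨η, hη, hηD⟩ := hK.exists_thickening_subset_open hD hKD
  exact ⟨η, hη, fun a ha b hb => hηD (mem_thickening_iff.2 ⟨a, ha, by rwa [dist_eq_norm]⟩)⟩

end UniformEstimates

section Laurent

open Polynomial

lemma eventually_exists_polynomial_of_mem_span_fourier {g : C(Angles, ℂ)}
    (hg : g ∈ Submodule.span ℂ (range (@fourier (2 * π)))) :
    ∀ᶠ N : ℕ in atTop, ∃ p : ℂ[X], ∀ x : Angles,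
      g x * (x.toCircle : ℂ) ^ N = p.eval (x.toCircle : ℂ) := by
  induction hg using Submodule.span_induction with
  | mem g hg =>
    obtain ⟨n, rfl⟩ := hg
    filter_upwards [eventually_ge_atTop n.natAbs] with N hN
    refine ⟨X ^ (n + N).toNat, fun x => ?_⟩
    rw [fourier_apply, AddCircle.toCircle_zsmul, Circle.coe_zpow, eval_pow, eval_X,
      ← zpow_natCast, ← zpow_natCast, ← zpow_add₀ (Circle.coe_ne_zero _)]
    congr 1
    omega
  | zero => exact .of_forall fun N => ⟨0, fun x => by simp⟩
  | add f g _ _ hf hg =>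
    filter_upwards [hf, hg] with N ⟨p, hp⟩ ⟨q, hq⟩
    exact ⟨p + q, fun x => by rw [ContinuousMap.add_apply, add_mul, hp, hq, eval_add]⟩
  | smul c f _ hf =>
    filter_upwards [hf] with N ⟨p, hp⟩
    exact ⟨C c * p, fun x => by
      rw [ContinuousMap.smul_apply, smul_eq_mul, mul_assoc, hp, eval_mul, eval_C]⟩

lemma eventually_exists_polynomial_norm_sub_lt (f : C(Angles, ℂ)) {ε : ℝ} (hε : 0 < ε) :
    ∀ᶠ N : ℕ in atTop, ∃ p : ℂ[X], ∀ x : Angles,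
      ‖p.eval (x.toCircle : ℂ) - (x.toCircle : ℂ) ^ N * f x‖ < ε := by
  have hf : f ∈ (Submodule.span ℂ (range (@fourier (2 * π)))).topologicalClosure := by
    rw [span_fourier_closure_eq_top]; trivial
  obtain ⟨g, hg, hfg⟩ := Metric.mem_closure_iff.1 hf ε hε
  filter_upwards [eventually_exists_polynomial_of_mem_span_fourier hg] with N ⟨p, hp⟩
  refine ⟨p, fun x => ?_⟩
  rw [← hp, mul_comm, ← mul_sub, norm_mul, norm_pow, Circle.norm_coe, one_pow, one_mul,
    ← dist_eq_norm, dist_comm]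
  exact (ContinuousMap.dist_apply_le_dist x).trans_lt hfg

lemma exists_differentiable_norm_sub_lt {J : Type*} [Fintype J] (f : C(Angles, J → ℂ)) {ε : ℝ}
    (hε : 0 < ε) :
    ∃ (N : ℕ) (q : ℂ → J → ℂ), Differentiable ℂ q ∧ ∀ x : Angles,
      ‖q x.toCircle - (x.toCircle : ℂ) ^ N • f x‖ < ε := by
  obtain ⟨N, hN⟩ := (eventually_all.2 fun j => eventually_exists_polynomial_norm_sub_lt
    ((ContinuousMap.mk (fun v : J → ℂ => v j) (continuous_apply j)).comp f) hε).exists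
  choose p hp using hN
  refine ⟨N, fun ζ j => (p j).eval ζ, differentiable_pi.2 fun j => (p j).differentiable,
    fun x => (pi_norm_lt_iff hε).2 fun j => hp j x⟩

end Laurent

section HoloDisc

variable {F : Type*} [NormedAddCommGroup F] [NormedSpace ℂ F] {ψ : ℂ → F}

lemma isHoloDisc_iff : IsHoloDisc (H := F) ψ ↔
    ∃ U : Set ℂ, IsOpen U ∧ closedBall (0 : ℂ) 1 ⊆ U ∧ DifferentiableOn ℂ ψ U := by
  simp only [IsHoloDisc, mdifferentiableOn_iff_differentiableOn]

lemma isHoloDisc_of_differentiable (hψ : Differentiable ℂ ψ) : IsHoloDisc (H := F) ψ :=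
  isHoloDisc_iff.2 ⟨univ, isOpen_univ, subset_univ _, hψ.differentiableOn⟩

lemma IsHoloDisc.continuousOn (hψ : IsHoloDisc (H := F) ψ) :
    ContinuousOn ψ (closedBall 0 1) := by
  obtain ⟨U, -, hU, hψU⟩ := isHoloDisc_iff.1 hψ
  exact hψU.continuousOn.mono hU

lemma IsHoloDisc.exists_hasFPowerSeriesOnBall [CompleteSpace F] (hψ : IsHoloDisc (H := F) ψ) :
    ∃ (p : FormalMultilinearSeries ℂ ℂ F) (R : NNReal), 1 < R ∧ HasFPowerSeriesOnBall ψ p 0 R := by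
  obtain ⟨U, hU, hsub, hψU⟩ := isHoloDisc_iff.1 hψ
  obtain ⟨δ, hδ, hδU⟩ := (isCompact_closedBall (0 : ℂ) 1).exists_cthickening_subset_open hU hsub
  rw [cthickening_closedBall hδ.le zero_le_one] at hδU
  lift δ to NNReal using hδ.le
  have hR : 1 < δ + 1 := lt_add_of_pos_left 1 (NNReal.coe_pos.1 hδ)
  exact ⟨_, δ + 1, hR, (hψU.mono hδU).hasFPowerSeriesOnBall (zero_lt_one.trans hR)⟩

lemma differentiable_partialSum (p : FormalMultilinearSeries ℂ ℂ F) (n : ℕ) :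
    Differentiable ℂ (p.partialSum n) := by
  unfold FormalMultilinearSeries.partialSum
  simp only [FormalMultilinearSeries.apply_eq_pow_smul_coeff]
  fun_prop

lemma partialSum_succ_zero (p : FormalMultilinearSeries ℂ ℂ F) (n : ℕ) :
    p.partialSum (n + 1) 0 = p 0 0 := by
  rw [FormalMultilinearSeries.partialSum, Finset.sum_eq_single_of_mem 0 (by simp)]
  · rfl
  · exact fun k _ hk => (p k).map_coord_zero ⟨0, Nat.pos_of_ne_zero hk⟩ rfl

lemma IsHoloDisc.exists_differentiable_norm_sub_lt [CompleteSpace F]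
    (hψ : IsHoloDisc (H := F) ψ) {ε : ℝ} (hε : 0 < ε) :
    ∃ g : ℂ → F, Differentiable ℂ g ∧ g 0 = ψ 0 ∧ ∀ ζ ∈ closedBall (0 : ℂ) 1, ‖g ζ - ψ ζ‖ < ε := by
  obtain ⟨p, R, hR, hp⟩ := hψ.exists_hasFPowerSeriesOnBall
  obtain ⟨r, hr, hrR⟩ := exists_between hR
  obtain ⟨n, hn⟩ := ((tendsto_add_atTop_nat 1).eventually
    (Metric.tendstoUniformlyOn_iff.1 (hp.tendstoUniformlyOn (ENNReal.coe_lt_coe.2 hrR)) ε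
      hε)).exists
  refine ⟨p.partialSum (n + 1), differentiable_partialSum p _, ?_, fun ζ hζ => ?_⟩
  · rw [partialSum_succ_zero, hp.coeff_zero]
  · rw [← dist_eq_norm, dist_comm]
    simpa only [zero_add] using hn ζ (closedBall_subset_ball (NNReal.coe_lt_coe.2 hr) hζ)

end HoloDisc

section Perturbation

variable {F : Type*} [NormedAddCommGroup F] [NormedSpace ℂ F]

/-- An entire map centred at `z` whose restriction to the closed unit disc takes values in `D`. -/
structure IsEntireDisc (D : Set F) (z : F) (φ : ℂ → F) : Prop where
  differentiable : Differentiable ℂ φ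
  map_zero : φ 0 = z
  mapsTo : MapsTo φ (closedBall 0 1) D

lemma IsEntireDisc.isHoloDisc {D : Set F} {z : F} {φ : ℂ → F} (hφ : IsEntireDisc D z φ) :
    IsHoloDisc (H := F) φ :=
  isHoloDisc_of_differentiable hφ.differentiable

lemma IsEntireDisc.mono_right {D D' : Set F} {z : F} {φ : ℂ → F} (hφ : IsEntireDisc D z φ)
    (hD : D ⊆ D') : IsEntireDisc D' z φ :=
  ⟨hφ.differentiable, hφ.map_zero, hφ.mapsTo.mono_right hD⟩

-- For large `n` the factor `ζ ^ n` is small unless `ζ` is close to the unit circle.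
lemma eventually_forall_prodMk_mul_pow_mem {O : Set (ℂ × ℂ)} (hO : IsOpen O)
    (hO_zero : closedBall 0 1 ×ˢ {0} ⊆ O) (hO_sphere : sphere 0 1 ×ˢ closedBall 0 1 ⊆ O) :
    ∀ᶠ n : ℕ in atTop, ∀ c ζ : ℂ, ‖c‖ = 1 → ‖ζ‖ ≤ 1 → (ζ, c * ζ ^ n) ∈ O := by
  obtain ⟨U, V, -, hV, hBU, hV0, hUV⟩ :=
    generalized_tube_lemma (isCompact_closedBall (0 : ℂ) 1) isCompact_singleton hO hO_zero
  obtain ⟨ρ, hρ, hρV⟩ := Metric.isOpen_iff.1 hV 0 (hV0 rfl)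
  obtain ⟨U', V', hU', -, hSU', hBV', hUV'⟩ :=
    generalized_tube_lemma (isCompact_sphere (0 : ℂ) 1) (isCompact_closedBall 0 1) hO hO_sphere
  obtain ⟨s, ⟨hs0, hs1⟩, hs⟩ : ∃ s ∈ Ioo (0 : ℝ) 1, closedBall (0 : ℂ) 1 \ U' ⊆ ball 0 s := by
    refine exists_pos_lt_subset_ball one_pos (isClosed_closedBall.sdiff hU') ?_
    rw [sdiff_subset_iff, union_comm, ← ball_union_sphere]
    exact union_subset_union_right _ hSU'
  filter_upwards [(tendsto_pow_atTop_nhds_zero_of_lt_one hs0.le hs1).eventually_lt_const hρ]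
    with n hn c ζ hc hζ
  have hnorm : ‖c * ζ ^ n‖ = ‖ζ‖ ^ n := by rw [norm_mul, hc, one_mul, norm_pow]
  have hζB : ζ ∈ closedBall (0 : ℂ) 1 := mem_closedBall_zero_iff.2 hζ
  by_cases hζU : ζ ∈ U'
  · refine hUV' ⟨hζU, hBV' (mem_closedBall_zero_iff.2 ?_)⟩
    exact hnorm.le.trans (pow_le_one₀ (norm_nonneg ζ) hζ)
  · have hζs : ‖ζ‖ < s := mem_ball_zero_iff.1 (hs ⟨hζB, hζU⟩)
    refine hUV ⟨hBU hζB, hρV (mem_ball_zero_iff.2 ?_)⟩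
    exact hnorm.trans_lt ((pow_le_pow_left₀ (norm_nonneg ζ) hζs.le n).trans_lt hn)

variable {E : Type*} [NormedAddCommGroup E] [NormedSpace ℂ E] {D : Set F}

lemma eventually_isEntireDisc_add_comp_mul_pow_smul (hD : IsOpen D) {g : ℂ → F} {q : ℂ → E}
    {φ : E → F} (hg : Differentiable ℂ g) (hq : Differentiable ℂ q) (hφ : Differentiable ℂ φ)
    (hφ0 : φ 0 = 0) (hgD : MapsTo g (closedBall 0 1) D)
    (hD_sphere : ∀ ζ ∈ sphere (0 : ℂ) 1, ∀ w ∈ closedBall (0 : ℂ) 1, g ζ + φ (w • q ζ) ∈ D) :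
    ∀ᶠ n : ℕ in atTop, ∀ c : ℂ, ‖c‖ = 1 →
      IsEntireDisc D (g 0) fun ζ => g ζ + φ ((c * ζ ^ n) • q ζ) := by
  have hcont : Continuous fun p : ℂ × ℂ => g p.1 + φ (p.2 • q p.1) :=
    (hg.continuous.comp continuous_fst).add
      (hφ.continuous.comp (continuous_snd.smul (hq.continuous.comp continuous_fst)))
  have hmem := eventually_forall_prodMk_mul_pow_mem (hD.preimage hcont)
    (by rintro ⟨ζ, _⟩ ⟨hζ, rfl⟩; simpa [hφ0] using hgD hζ)
    (fun p hp => hD_sphere p.1 hp.1 p.2 hp.2)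
  filter_upwards [hmem, eventually_ne_atTop 0] with n hn hn0
  refine fun c hc => ⟨?_, ?_, fun ζ hζ => hn c ζ hc (mem_closedBall_zero_iff.1 hζ)⟩
  · exact hg.add (hφ.comp (((differentiable_id.pow n).const_mul c).smul hq))
  · simp [hn0, hφ0]

lemma exists_differentiable_perturbation_near [CompleteSpace F] {J : Type*} [Finite J]
    {ψ : ℂ → F} (hψ : IsHoloDisc (H := F) ψ) {φ : (J → ℂ) → F} (hφ : Continuous φ)
    (χ : C(Angles, J → ℂ)) {η : ℝ} (hη : 0 < η) :
    ∃ (M : ℕ) (g : ℂ → F) (q : ℂ → J → ℂ), Differentiable ℂ g ∧ Differentiable ℂ q ∧ g 0 = ψ 0 ∧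
      (∀ ζ ∈ closedBall (0 : ℂ) 1, ‖g ζ - ψ ζ‖ < η) ∧ ∀ x, ∀ w ∈ closedBall (0 : ℂ) 1,
        ‖g x.toCircle + φ (w • q x.toCircle) -
          (ψ x.toCircle + φ ((w * (x.toCircle : ℂ) ^ M) • χ x))‖ < η := by
  have := Fintype.ofFinite J
  have hT : IsCompact ((univ : Set Angles) ×ˢ closedBall (0 : ℂ) 1) :=
    isCompact_univ.prod (isCompact_closedBall 0 1)
  have hsmul : Continuous fun p : Angles × ℂ => p.2 • χ p.1 := by fun_prop
  obtain ⟨g, hg, hg0, hgψ⟩ := hψ.exists_differentiable_norm_sub_lt (half_pos hη)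
  obtain ⟨δ, hδ, hφδ⟩ :=
    exists_forall_norm_sub_lt_of_isCompact (hT.image hsmul) hφ (half_pos hη)
  obtain ⟨M, q, hq, hqχ⟩ := exists_differentiable_norm_sub_lt χ hδ
  refine ⟨M, g, q, hg, hq, hg0, fun ζ hζ => (hgψ ζ hζ).trans (half_lt_self hη), fun x w hw => ?_⟩
  rw [mem_closedBall_zero_iff] at hw
  have hwM : w * (x.toCircle : ℂ) ^ M ∈ closedBall (0 : ℂ) 1 := by
    rwa [mem_closedBall_zero_iff, norm_mul_toCircle_pow]
  have hφq : ‖φ (w • q x.toCircle) - φ ((w * (x.toCircle : ℂ) ^ M) • χ x)‖ < η / 2 := by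
    refine hφδ _ ⟨(x, _), ⟨mem_univ _, hwM⟩, rfl⟩ _ ?_
    change ‖w • q x.toCircle - (w * (x.toCircle : ℂ) ^ M) • χ x‖ < δ
    rw [mul_smul, ← smul_sub, norm_smul]
    exact (mul_le_of_le_one_left (norm_nonneg _) hw).trans_lt (hqχ x)
  rw [add_sub_add_comm, ← add_halves η]
  exact (norm_add_le _ _).trans_lt (add_lt_add (hgψ _ (toCircle_mem_closedBall x)) hφq)

lemma exists_isEntireDisc_near_perturbation [CompleteSpace F] {J : Type*} [Finite J]
    (hD : IsOpen D) {ψ : ℂ → F} (hψ : IsHoloDisc (H := F) ψ) (hψD : MapsTo ψ (closedBall 0 1) D)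
    {φ : (J → ℂ) → F} (hφ : Differentiable ℂ φ) (hφ0 : φ 0 = 0) (χ : C(Angles, J → ℂ))
    (hχD : ∀ x, ∀ w ∈ closedBall (0 : ℂ) 1, ψ x.toCircle + φ (w • χ x) ∈ D)
    {η : ℝ} (hη : 0 < η) :
    ∃ N : ℕ, ∀ c : ℂ, ‖c‖ = 1 → ∃ Φ : ℂ → F, IsEntireDisc D (ψ 0) Φ ∧ ∀ x,
      ‖Φ x.toCircle - (ψ x.toCircle + φ ((c * (x.toCircle : ℂ) ^ N) • χ x))‖ < η := by
  have := Fintype.ofFinite J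
  have hT : IsCompact ((univ : Set Angles) ×ˢ closedBall (0 : ℂ) 1) :=
    isCompact_univ.prod (isCompact_closedBall 0 1)
  have hsmul : Continuous fun p : Angles × ℂ => p.2 • χ p.1 := by fun_prop
  set G : Angles × ℂ → F := fun p => ψ p.1.toCircle + φ (p.2 • χ p.1)
  have hG : Continuous G :=
    ((continuous_comp_toCircle hψ.continuousOn).comp continuous_fst).add (hφ.continuous.comp hsmul)
  obtain ⟨η₀, hη₀, hη₀D⟩ := exists_forall_norm_sub_lt_imp_mem
    (((isCompact_closedBall 0 1).image_of_continuousOn hψ.continuousOn).union (hT.image hG)) hD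
    (union_subset (image_subset_iff.2 hψD) (image_subset_iff.2 fun p hp => hχD p.1 p.2 hp.2))
  obtain ⟨M, g, q, hg, hq, hg0, hgψ, hgG⟩ :=
    exists_differentiable_perturbation_near hψ hφ.continuous χ (lt_min hη hη₀)
  have hgD : MapsTo g (closedBall 0 1) D := fun ζ hζ =>
    hη₀D _ (.inl ⟨ζ, hζ, rfl⟩) _ ((hgψ ζ hζ).trans_le (min_le_right _ _))
  have hgD_sphere : ∀ ζ ∈ sphere (0 : ℂ) 1, ∀ w ∈ closedBall (0 : ℂ) 1, g ζ + φ (w • q ζ) ∈ D := by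
    intro ζ hζ w hw
    obtain ⟨x, rfl⟩ := exists_toCircle_eq (mem_sphere_zero_iff_norm.1 hζ)
    have hwM : w * (x.toCircle : ℂ) ^ M ∈ closedBall (0 : ℂ) 1 := by
      rwa [mem_closedBall_zero_iff, norm_mul_toCircle_pow, ← mem_closedBall_zero_iff]
    exact hη₀D _ (.inr ⟨(x, _), ⟨mem_univ _, hwM⟩, rfl⟩) _
      ((hgG x w hw).trans_le (min_le_right _ _))
  obtain ⟨n, hn⟩ :=
    (eventually_isEntireDisc_add_comp_mul_pow_smul hD hg hq hφ hφ0 hgD hgD_sphere).exists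
  refine ⟨n + M, fun c hc => ⟨_, hg0 ▸ hn c hc, fun x => ?_⟩⟩
  have hcn : c * (x.toCircle : ℂ) ^ n ∈ closedBall (0 : ℂ) 1 := by
    rw [mem_closedBall_zero_iff, norm_mul_toCircle_pow, hc]
  rw [pow_add, ← mul_assoc]
  exact (hgG x _ hcn).trans_le (min_le_left _ _)

end Perturbation

section Shear

lemma exists_isCompact_measure_compl_lt {X : Type*} [TopologicalSpace X] [T2Space X]
    [MeasurableSpace X] [OpensMeasurableSpace X] (μ : Measure X) [IsFiniteMeasure μ]
    [μ.InnerRegularCompactLTTop] {s : Set X} (hs : MeasurableSet s) {q : ENNReal}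
    (hq : μ sᶜ < q) : ∃ K ⊆ s, IsCompact K ∧ μ Kᶜ < q := by
  obtain ⟨K, hKs, hK, hlt⟩ :=
    hs.exists_isCompact_sdiff_lt (measure_ne_top μ s) (tsub_pos_of_lt hq).ne'
  refine ⟨K, hKs, hK, ?_⟩
  have hsub : Kᶜ ⊆ sᶜ ∪ s \ K := fun x hx =>
    (em (x ∈ s)).elim (fun h => .inr ⟨h, hx⟩) .inl
  calc μ Kᶜ ≤ μ sᶜ + μ (s \ K) := (measure_mono hsub).trans (measure_union_le _ _)
    _ < q := by rw [add_comm]; exact lt_tsub_iff_right.1 hlt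

lemma exists_shear_measure_le (N : ℕ) {B : Set (Angles × Angles)} (hB : MeasurableSet B) :
    ∃ t : Angles, angleMeasure {x | (x, N • x + t) ∈ B} ≤ (angleMeasure.prod angleMeasure) B := by
  have hcont : Continuous fun p : Angles × Angles => N • p.1 + p.2 := by fun_prop
  have hshear : MeasurePreserving (fun p : Angles × Angles => (p.1, N • p.1 + p.2))
      (angleMeasure.prod angleMeasure) (angleMeasure.prod angleMeasure) :=
    (MeasurePreserving.id angleMeasure).skew_product (g := fun x t => N • x + t) hcont.measurable
      (ae_of_all _ fun x => map_add_left_eq_self _ _)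
  have hswap := hshear.comp Measure.measurePreserving_swap
  have hB' := hswap.measurable hB
  obtain ⟨t, ht⟩ := exists_le_lintegral (μ := angleMeasure)
    (measurable_measure_prodMk_left (ν := angleMeasure) hB').aemeasurable
  refine ⟨t, ht.trans_eq ?_⟩
  rw [← Measure.prod_apply hB', hswap.measure_preimage hB.nullMeasurableSet]

variable {F : Type*} [NormedAddCommGroup F] [NormedSpace ℂ F] [CompleteSpace F]

-- The perturbation is realized along the sheared diagonal `y = N • x + t`; averaging over `t`
-- compares the measure along the diagonal with the product measure.
lemma exists_isEntireDisc_measure_le_prod {J : Type*} [Finite J] {D : Set F} (hD : IsOpen D)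
    {ψ : ℂ → F} (hψ : IsHoloDisc (H := F) ψ) (hψD : MapsTo ψ (closedBall 0 1) D)
    {φ : (J → ℂ) → F} (hφ : Differentiable ℂ φ) (hφ0 : φ 0 = 0) (χ : C(Angles, J → ℂ))
    (hχD : ∀ x, ∀ w ∈ closedBall (0 : ℂ) 1, ψ x.toCircle + φ (w • χ x) ∈ D)
    {W : Set (Angles × F)} (hW : IsOpen W) {ε : ENNReal} (hε : ε ≠ 0) :
    ∃ Φ : ℂ → F, IsEntireDisc D (ψ 0) Φ ∧ angleMeasure {x | (x, Φ x.toCircle) ∉ W} ≤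
      (angleMeasure.prod angleMeasure)
        {p | (p.1, ψ p.1.toCircle + φ ((p.2.toCircle : ℂ) • χ p.1)) ∉ W} + ε := by
  set G : Angles × Angles → Angles × F :=
    fun p => (p.1, ψ p.1.toCircle + φ ((p.2.toCircle : ℂ) • χ p.1))
  have hψc := continuous_comp_toCircle hψ.continuousOn
  have hG : Continuous G := by
    refine continuous_fst.prodMk ((hψc.comp continuous_fst).add (hφ.continuous.comp ?_))
    exact (continuous_coe_toCircle.comp continuous_snd).smul (χ.continuous.comp continuous_fst)
  obtain ⟨K, hKW, hK, hKlt⟩ := exists_isCompact_measure_compl_lt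
    (angleMeasure.prod angleMeasure) (hW.preimage hG).measurableSet
    (ENNReal.lt_add_right (measure_ne_top _ _) hε)
  obtain ⟨η, hη, hηW⟩ := (hK.image hG).exists_thickening_subset_open hW (image_subset_iff.2 hKW)
  obtain ⟨N, hN⟩ := exists_isEntireDisc_near_perturbation hD hψ hψD hφ hφ0 χ hχD hη
  obtain ⟨t, ht⟩ := exists_shear_measure_le N hK.isClosed.measurableSet.compl
  obtain ⟨Φ, hΦ, hΦη⟩ := hN t.toCircle (Circle.norm_coe t.toCircle)
  have hsub : {x | (x, Φ x.toCircle) ∉ W} ⊆ {x | (x, N • x + t) ∈ Kᶜ} := by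
    intro x hx hxK
    refine hx (hηW (mem_thickening_iff.2 ⟨G (x, N • x + t), mem_image_of_mem G hxK, ?_⟩))
    have hnear := hΦη x
    rw [← toCircle_nsmul_add, ← dist_eq_norm] at hnear
    exact max_lt ((dist_self x).trans_lt hη) hnear
  exact ⟨Φ, hΦ, (measure_mono hsub).trans (ht.trans hKlt.le)⟩

end Shear

section ExitMeasure

variable {X Y : Type*} [TopologicalSpace X] {D V : Set Y} {φ : ℂ → Y} {q : ENNReal}

open Classical in
/-- The measure of the boundary angles at which the disc `φ` lies outside `V`, for a disc mapping
the closed unit disc to `D`; the value is `⊤` for the other discs, so that they do not contribute to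
infima. -/
def exitMeasure (D V : Set Y) (φ : ℂ → Y) : ENNReal :=
  if MapsTo φ (closedBall 0 1) D then angleMeasure {x | φ x.toCircle ∉ V} else ⊤

lemma exitMeasure_lt_iff :
    exitMeasure D V φ < q ↔
      MapsTo φ (closedBall 0 1) D ∧ angleMeasure {x | φ x.toCircle ∉ V} < q := by
  rw [exitMeasure]
  split_ifs with h <;> simp [h]

lemma isOpen_setOf_measure_section_lt {O : Set (X × Angles)} (hO : IsOpen O) (q : ENNReal) :
    IsOpen {x | angleMeasure {y | (x, y) ∉ O} < q} := by
  refine isOpen_iff_mem_nhds.2 fun x hx => ?_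
  obtain ⟨K, hKO, hK, hKq⟩ := exists_isCompact_measure_compl_lt angleMeasure
    (hO.preimage (Continuous.prodMk_right x)).measurableSet hx
  have hev : ∀ᶠ x' in 𝓝 x, ∀ y ∈ K, (x', y) ∈ O :=
    hK.eventually_forall_of_forall_eventually fun y hy => hO.mem_nhds (hKO hy)
  filter_upwards [hev] with x' hx'
  have hsub : {y | (x', y) ∉ O} ⊆ Kᶜ := fun y hy hyK => hy (hx' y hyK)
  exact (measure_mono hsub).trans_lt hKq

variable [TopologicalSpace Y]

lemma isOpen_setOf_mapsTo_closedBall (hD : IsOpen D) {f : X × ℂ → Y} (hf : Continuous f) :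
    IsOpen {x | MapsTo (fun ζ => f (x, ζ)) (closedBall 0 1) D} :=
  isOpen_iff_mem_nhds.2 fun _ hx =>
    (isCompact_closedBall (0 : ℂ) 1).eventually_forall_of_forall_eventually fun _ hζ =>
      (hD.preimage hf).mem_nhds (hx hζ)

lemma upperSemicontinuous_exitMeasure (hD : IsOpen D) {W : Set (X × Y)} (hW : IsOpen W)
    {f : X × ℂ → Y} (hf : Continuous f) :
    UpperSemicontinuous fun x => exitMeasure D (Prod.mk x ⁻¹' W) fun ζ => f (x, ζ) := by
  refine upperSemicontinuous_iff_isOpen_preimage.2 fun q => ?_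
  simp only [preimage, mem_Iio, exitMeasure_lt_iff]
  have hcont : Continuous fun p : X × Angles => (p.1, f (p.1, p.2.toCircle)) :=
    continuous_fst.prodMk
      (hf.comp (continuous_fst.prodMk (continuous_coe_toCircle.comp continuous_snd)))
  exact (isOpen_setOf_mapsTo_closedBall hD hf).inter
    (isOpen_setOf_measure_section_lt (hW.preimage hcont) q)

end ExitMeasure

section DiscMeasure

variable {F : Type*} [NormedAddCommGroup F] [NormedSpace ℂ F] {D D' V : Set F} {z : F}
  {q : ENNReal}

/-- Poletsky's disc functional: the infimum, over the entire discs centred at `z` which map the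
closed unit disc to `D`, of the measure of the boundary angles sent outside `V`. The discs are
written `z + φ` with `φ 0 = 0`, so that the same `φ` serve for all centres. -/
def discMeasure (D V : Set F) (z : F) : ENNReal :=
  ⨅ (φ : ℂ → F) (_ : Differentiable ℂ φ ∧ φ 0 = 0), exitMeasure D V fun ζ => z + φ ζ

lemma discMeasure_lt_iff_exists_exitMeasure :
    discMeasure D V z < q ↔ ∃ φ : ℂ → F, (Differentiable ℂ φ ∧ φ 0 = 0) ∧
      exitMeasure D V (fun ζ => z + φ ζ) < q := by
  simp only [discMeasure, iInf_lt_iff, exists_prop]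

lemma discMeasure_lt_iff :
    discMeasure D V z < q ↔
      ∃ φ, IsEntireDisc D z φ ∧ angleMeasure {x | φ x.toCircle ∉ V} < q := by
  simp only [discMeasure_lt_iff_exists_exitMeasure, exitMeasure_lt_iff]
  constructor
  · rintro ⟨φ, ⟨hφ, hφ0⟩, hφD, hq⟩
    exact ⟨fun ζ => z + φ ζ, ⟨hφ.const_add z, by rw [hφ0, add_zero], hφD⟩, hq⟩
  · rintro ⟨φ, hφ, hq⟩
    refine ⟨fun ζ => φ ζ - z, ⟨hφ.differentiable.sub_const z, sub_eq_zero.2 hφ.map_zero⟩, ?_⟩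
    simpa only [add_sub_cancel] using ⟨hφ.mapsTo, hq⟩

lemma discMeasure_le {φ : ℂ → F} (hφ : IsEntireDisc D z φ) :
    discMeasure D V z ≤ angleMeasure {x | φ x.toCircle ∉ V} :=
  le_of_forall_gt fun _ hq => discMeasure_lt_iff.2 ⟨φ, hφ, hq⟩

lemma isEntireDisc_const (hz : z ∈ D) : IsEntireDisc D z fun _ => z :=
  ⟨differentiable_const z, rfl, fun _ _ => hz⟩

lemma discMeasure_le_one (hz : z ∈ D) : discMeasure D V z ≤ 1 :=
  (discMeasure_le (isEntireDisc_const hz)).trans prob_le_one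

lemma discMeasure_eq_zero (hz : z ∈ D) (hzV : z ∈ V) : discMeasure D V z = 0 := by
  simpa [hzV] using discMeasure_le (V := V) (isEntireDisc_const hz)

lemma discMeasure_anti (hD : D' ⊆ D) : discMeasure D V z ≤ discMeasure D' V z :=
  le_of_forall_gt fun _ hq => by
    obtain ⟨φ, hφ, hφq⟩ := discMeasure_lt_iff.1 hq
    exact discMeasure_lt_iff.2 ⟨φ, hφ.mono_right hD, hφq⟩

lemma discMeasure_inter_le (D V : Set F) {U : Set F} :
    discMeasure D (U ∩ V) z ≤ discMeasure (D ∩ U) V z :=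
  le_of_forall_gt fun _ hq => by
    obtain ⟨φ, hφ, hφq⟩ := discMeasure_lt_iff.1 hq
    have hsub : {x : Angles | φ x.toCircle ∉ U ∩ V} ⊆ {x : Angles | φ x.toCircle ∉ V} :=
      fun x hx hxV => hx ⟨(hφ.mapsTo (toCircle_mem_closedBall x)).2, hxV⟩
    exact discMeasure_lt_iff.2
      ⟨φ, hφ.mono_right inter_subset_left, (measure_mono hsub).trans_lt hφq⟩

lemma discMeasure_ne_top (hz : z ∈ D) : discMeasure D V z ≠ ⊤ :=
  ne_top_of_le_ne_top ENNReal.one_ne_top (discMeasure_le_one hz)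

lemma upperSemicontinuous_discMeasure (hD : IsOpen D) (hV : IsOpen V) :
    UpperSemicontinuous (discMeasure D V) :=
  upperSemicontinuous_biInf fun φ hφ => upperSemicontinuous_exitMeasure hD
    (W := Prod.snd ⁻¹' V) (f := fun p => p.1 + φ p.2) (hV.preimage continuous_snd)
    (continuous_fst.add (hφ.1.continuous.comp continuous_snd))

end DiscMeasure

section Selection

variable {X ι α : Type*} [TopologicalSpace X]

lemma exists_countable_forall_exists_lt [SecondCountableTopology X] [LinearOrder α]
    [DenselyOrdered α] [TopologicalSpace α] [OrderTopology α] [TopologicalSpace.SeparableSpace α]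
    {u : ι → X → α} (hu : ∀ i, UpperSemicontinuous (u i)) {b : X → α}
    (hub : ∀ x, ∃ i, u i x < b x) : ∃ T : Set ι, T.Countable ∧ ∀ x, ∃ i ∈ T, u i x < b x := by
  obtain ⟨Q, hQ, hQdense⟩ := TopologicalSpace.exists_countable_dense α
  choose T hT hTQ using fun q : α => TopologicalSpace.isOpen_iUnion_countable
    (fun i => u i ⁻¹' Iio q) fun i => (hu i).isOpen_preimage q
  refine ⟨⋃ q ∈ Q, T q, hQ.biUnion fun q _ => hT q, fun x => ?_⟩
  obtain ⟨i, hi⟩ := hub x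
  obtain ⟨q, hqQ, hiq, hqb⟩ := hQdense.exists_between hi
  have hx : x ∈ ⋃ i, u i ⁻¹' Iio q := mem_iUnion.2 ⟨i, hiq⟩
  rw [← hTQ q] at hx
  obtain ⟨j, hj, hjq⟩ := mem_iUnion₂.1 hx
  exact ⟨j, mem_iUnion₂.2 ⟨q, hqQ, hj⟩, lt_trans hjq hqb⟩

variable [T2Space X] [MeasurableSpace X] {μ : Measure X} [IsFiniteMeasure μ]
  [μ.InnerRegularCompactLTTop]

lemma exists_isCompact_pairwise_disjoint_measure_compl_lt [OpensMeasurableSpace X]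
    {S : ℕ → Set X} (hS : ∀ n, MeasurableSet (S n)) (hSU : ⋃ n, S n = univ) {ε : ENNReal}
    (hε : ε ≠ 0) :
    ∃ (n : ℕ) (K : Fin n → Set X), (∀ j, IsCompact (K j)) ∧ Pairwise (Function.onFun Disjoint K) ∧
      (∀ j, K j ⊆ S j) ∧ μ (⋃ j, K j)ᶜ < ε := by
  obtain ⟨δ, hδ, hδε⟩ := ENNReal.exists_pos_sum_of_countable' hε ℕ
  choose K hKS hK hKδ using fun n => (MeasurableSet.disjointed hS n).exists_isCompact_sdiff_lt
    (measure_ne_top μ _) (hδ n).ne'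
  have hcover : (⋃ n, K n)ᶜ ⊆ ⋃ n, disjointed S n \ K n := fun x hx => by
    obtain ⟨n, hn⟩ := mem_iUnion.1 ((iUnion_disjointed.trans hSU).symm ▸ mem_univ x)
    exact mem_iUnion.2 ⟨n, hn, fun hxK => hx (mem_iUnion.2 ⟨n, hxK⟩)⟩
  have hlt : μ (⋃ n, K n)ᶜ < ε := calc
    μ (⋃ n, K n)ᶜ ≤ ∑' n, μ (disjointed S n \ K n) :=
      (measure_mono hcover).trans (measure_iUnion_le _)
    _ ≤ ∑' n, δ n := ENNReal.tsum_le_tsum fun n => (hKδ n).le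
    _ < ε := hδε
  obtain ⟨n, hn⟩ : ∃ n, μ (accumulate K n)ᶜ < ε := by
    rw [← iUnion_accumulate, compl_iUnion] at hlt
    have hmeas : ∀ n, MeasurableSet (accumulate K n) := fun n =>
      .biUnion (to_countable _) fun k _ => (hK k).measurableSet
    exact ((tendsto_measure_iInter_atTop (fun n => (hmeas n).compl.nullMeasurableSet)
      (fun _ _ h => compl_subset_compl.2 (monotone_accumulate h))
      ⟨0, measure_ne_top μ _⟩).eventually_lt_const hlt).exists
  refine ⟨n + 1, fun j => K j, fun j => hK j, fun i j hij => ?_, fun j => ?_, ?_⟩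
  · exact (disjoint_disjointed S (Fin.val_ne_of_ne hij)).mono (hKS i) (hKS j)
  · exact (hKS j).trans (disjointed_subset S j)
  · refine (measure_mono (compl_subset_compl.2 (iUnion₂_subset fun k hk => ?_))).trans_lt hn
    exact subset_iUnion (fun j : Fin (n + 1) => K j) ⟨k, Nat.lt_succ_of_le hk⟩

lemma exists_isCompact_forall_lt [SecondCountableTopology X] [BorelSpace X] [Nonempty X]
    {u : ι → X → ENNReal} (hu : ∀ i, UpperSemicontinuous (u i)) {b : X → ENNReal}
    (hb : Measurable b) (hub : ∀ x, ∃ i, u i x < b x) {ε : ENNReal} (hε : ε ≠ 0) :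
    ∃ (n : ℕ) (i : Fin n → ι) (K : Fin n → Set X), (∀ j, IsCompact (K j)) ∧
      Pairwise (Function.onFun Disjoint K) ∧ (∀ j, ∀ x ∈ K j, u (i j) x < b x) ∧
      μ (⋃ j, K j)ᶜ < ε := by
  obtain ⟨T, hT, hTb⟩ := exists_countable_forall_exists_lt hu hub
  obtain ⟨i, rfl⟩ := hT.exists_eq_range (let ⟨j, hj, _⟩ := hTb (Classical.arbitrary X); ⟨j, hj⟩)
  obtain ⟨n, K, hK, hKdisj, hKb, hKε⟩ := exists_isCompact_pairwise_disjoint_measure_compl_lt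
    (μ := μ) (S := fun n => {x | u (i n) x < b x})
    (fun n => measurableSet_lt (hu _).measurable hb)
    (eq_univ_of_forall fun x => by
      obtain ⟨_, ⟨n, rfl⟩, hn⟩ := hTb x
      exact mem_iUnion.2 ⟨n, hn⟩) hε
  exact ⟨n, fun j => i j, K, hK, hKdisj, hKb, hKε⟩

end Selection

section Bump

lemma exists_isOpen_pairwise_disjoint {X J : Type*} [TopologicalSpace X] [T2Space X] [Finite J]
    {K A : J → Set X} (hK : ∀ j, IsCompact (K j)) (hKdisj : Pairwise (Function.onFun Disjoint K))
    (hA : ∀ j, IsOpen (A j)) (hKA : ∀ j, K j ⊆ A j) :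
    ∃ B : J → Set X, (∀ j, IsOpen (B j) ∧ K j ⊆ B j ∧ B j ⊆ A j) ∧
      Pairwise (Function.onFun Disjoint B) := by
  obtain ⟨s, hs, hsdisj⟩ := Pairwise.exists_mem_filter_of_disjoint (l := fun j => 𝓝ˢ (K j))
    fun i j hij =>
      (SeparatedNhds.of_isCompact_isCompact (hK i) (hK j) (hKdisj hij)).disjoint_nhdsSet
  refine ⟨fun j => interior (s j) ∩ A j, fun j => ⟨isOpen_interior.inter (hA j), ?_,
    inter_subset_right⟩, fun i j hij => ?_⟩
  · exact subset_inter (subset_interior_iff_mem_nhdsSet.2 (hs j)) (hKA j)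
  · exact (hsdisj hij).mono (inter_subset_left.trans interior_subset)
      (inter_subset_left.trans interior_subset)

lemma exists_continuousMap_eq_single {X J : Type*} [TopologicalSpace X] [T2Space X]
    [CompactSpace X] [Finite J] [DecidableEq J] {K A : J → Set X}
    (hK : ∀ j, IsCompact (K j)) (hKdisj : Pairwise (Function.onFun Disjoint K))
    (hA : ∀ j, IsOpen (A j)) (hKA : ∀ j, K j ⊆ A j) :
    ∃ χ : C(X, J → ℂ), (∀ j, ∀ x ∈ K j, χ x = Pi.single j 1) ∧
      ∀ x, χ x = 0 ∨ ∃ j, x ∈ A j ∧ ∃ c : ℂ, ‖c‖ ≤ 1 ∧ χ x = Pi.single j c := by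
  obtain ⟨B, hB, hBdisj⟩ := exists_isOpen_pairwise_disjoint hK hKdisj hA hKA
  choose f hfK hfB _ hf01 using fun j => exists_continuous_one_zero_of_isCompact (hK j)
    (hB j).1.isClosed_compl (disjoint_compl_right_iff_subset.2 (hB j).2.1)
  have hsingle : ∀ j, ∀ x ∈ B j, (fun i => (f i x : ℂ)) = Pi.single j (f j x : ℂ) := by
    refine fun j x hx => funext fun i => ?_
    rcases eq_or_ne i j with rfl | hij
    · rw [Pi.single_eq_same]
    · rw [Pi.single_eq_of_ne hij, hfB i (disjoint_right.1 (hBdisj hij) hx), Pi.zero_apply,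
        Complex.ofReal_zero]
  refine ⟨⟨fun x i => (f i x : ℂ), by fun_prop⟩, fun j x hx => ?_, fun x => ?_⟩
  · exact (hsingle j x ((hB j).2.1 hx)).trans (by rw [hfK j hx, Pi.one_apply, Complex.ofReal_one])
  · by_cases hx : ∃ j, x ∈ B j
    · obtain ⟨j, hj⟩ := hx
      refine .inr ⟨j, (hB j).2.2 hj, f j x, ?_, hsingle j x hj⟩
      rw [Complex.norm_real, Real.norm_of_nonneg (hf01 j x).1]
      exact (hf01 j x).2
    · push Not at hx
      exact .inl (funext fun j => by simpa using hfB j (hx j))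

end Bump

section Gluing

lemma prod_measure_le_lintegral_add {X Y : Type*} [MeasurableSpace X] [MeasurableSpace Y]
    {μ : Measure X} {ν : Measure Y} [IsProbabilityMeasure ν] {E : Set (X × Y)}
    (hE : MeasurableSet E) {K : Set X} (hK : MeasurableSet K) {b : X → ENNReal} (hb : Measurable b)
    (hKb : ∀ x ∈ K, ν (Prod.mk x ⁻¹' E) ≤ b x) :
    (μ.prod ν) E ≤ ∫⁻ x, b x ∂μ + μ Kᶜ := by
  calc (μ.prod ν) E = ∫⁻ x, ν (Prod.mk x ⁻¹' E) ∂μ := Measure.prod_apply hE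
    _ ≤ ∫⁻ x, (b x + Kᶜ.indicator 1 x) ∂μ := by
      refine lintegral_mono fun x => ?_
      by_cases hx : x ∈ K
      · exact (hKb x hx).trans le_self_add
      · rw [indicator_of_mem (mem_compl hx), Pi.one_apply]
        exact prob_le_one.trans le_add_self
    _ = ∫⁻ x, b x ∂μ + μ Kᶜ := by
      rw [lintegral_add_left hb, lintegral_indicator_one hK.compl]

lemma sum_apply_smul_single {J F : Type*} [Fintype J] [DecidableEq J] [AddCommMonoid F]
    {φ : J → ℂ → F} (hφ0 : ∀ j, φ j 0 = 0) (w : ℂ) (j : J) (c : ℂ) :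
    ∑ i, φ i ((w • Pi.single j c : J → ℂ) i) = φ j (w * c) := by
  rw [← Pi.single_smul, smul_eq_mul]
  refine (Fintype.sum_eq_single j fun i hi => ?_).trans ?_
  · rw [Pi.single_eq_of_ne hi, hφ0]
  · rw [Pi.single_eq_same]

variable {F : Type*} [NormedAddCommGroup F] [NormedSpace ℂ F] [CompleteSpace F] {D : Set F}

lemma exists_isEntireDisc_measure_le_of_forall_exitMeasure_lt (hD : IsOpen D) {ψ : ℂ → F}
    (hψ : IsHoloDisc (H := F) ψ) (hψD : MapsTo ψ (closedBall 0 1) D) {W : Set (Angles × F)}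
    (hW : IsOpen W) {b : Angles → ENNReal} (hb : Measurable b) {J : Type*} [Finite J]
    {φ : J → ℂ → F} (hφ : ∀ j, Differentiable ℂ (φ j)) (hφ0 : ∀ j, φ j 0 = 0)
    {K : J → Set Angles} (hK : ∀ j, IsCompact (K j))
    (hKdisj : Pairwise (Function.onFun Disjoint K))
    (hKb : ∀ j, ∀ x ∈ K j,
      exitMeasure D (Prod.mk x ⁻¹' W) (fun ζ => ψ x.toCircle + φ j ζ) < b x)
    {ε : ENNReal} (hε : ε ≠ 0) :
    ∃ Φ, IsEntireDisc D (ψ 0) Φ ∧ angleMeasure {x | (x, Φ x.toCircle) ∉ W} ≤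
      ∫⁻ x, b x ∂angleMeasure + angleMeasure (⋃ j, K j)ᶜ + ε := by
  classical
  have := Fintype.ofFinite J
  have hψc := continuous_comp_toCircle hψ.continuousOn
  have hcont : ∀ j, Continuous fun p : Angles × ℂ => ψ p.1.toCircle + φ j p.2 := fun j =>
    (hψc.comp continuous_fst).add ((hφ j).continuous.comp continuous_snd)
  simp only [exitMeasure_lt_iff] at hKb
  obtain ⟨χ, hχK, hχ⟩ := exists_continuousMap_eq_single hK hKdisj
    (fun j => isOpen_setOf_mapsTo_closedBall hD (hcont j)) (fun j x hx => (hKb j x hx).1)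
  set Ψ : (J → ℂ) → F := fun v => ∑ j, φ j (v j)
  have hΨ : Differentiable ℂ Ψ := Differentiable.fun_sum fun j _ =>
    (hφ j).comp (differentiable_pi.1 differentiable_id j)
  have hΨ0 : Ψ 0 = 0 := Finset.sum_eq_zero fun j _ => hφ0 j
  have hΨ_single : ∀ j c w, Ψ (w • Pi.single j c) = φ j (w * c) := fun j c w =>
    sum_apply_smul_single hφ0 w j c
  have hχD : ∀ x, ∀ w ∈ closedBall (0 : ℂ) 1, ψ x.toCircle + Ψ (w • χ x) ∈ D := by
    intro x w hw
    rcases hχ x with hx | ⟨j, hxj, c, hc, hx⟩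
    · rw [hx, smul_zero, hΨ0, add_zero]
      exact hψD (toCircle_mem_closedBall x)
    · rw [hx, hΨ_single]
      refine hxj (mem_closedBall_zero_iff.2 ?_)
      rw [norm_mul]
      exact mul_le_one₀ (mem_closedBall_zero_iff.1 hw) (norm_nonneg c) hc
  have hEc : Continuous fun p : Angles × Angles =>
      (p.1, ψ p.1.toCircle + Ψ ((p.2.toCircle : ℂ) • χ p.1)) :=
    continuous_fst.prodMk ((hψc.comp continuous_fst).add (hΨ.continuous.comp
      ((continuous_coe_toCircle.comp continuous_snd).smul (χ.continuous.comp continuous_fst))))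
  obtain ⟨Φ, hΦ, hΦε⟩ := exists_isEntireDisc_measure_le_prod hD hψ hψD hΨ hΨ0 χ hχD hW hε
  refine ⟨Φ, hΦ, hΦε.trans (add_le_add_left (prod_measure_le_lintegral_add
    (hW.preimage hEc).measurableSet.compl (.iUnion fun j => (hK j).measurableSet) hb ?_) ε)⟩
  intro x hx
  obtain ⟨j, hj⟩ := mem_iUnion.1 hx
  simpa [preimage, hχK j x hj, hΨ_single] using (hKb j x hj).2.le

theorem exists_isEntireDisc_measure_le_lintegral (hD : IsOpen D) {ψ : ℂ → F}
    (hψ : IsHoloDisc (H := F) ψ) (hψD : MapsTo ψ (closedBall 0 1) D) {W : Set (Angles × F)}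
    (hW : IsOpen W) {b : Angles → ENNReal} (hb : Measurable b)
    (hWb : ∀ x, discMeasure D (Prod.mk x ⁻¹' W) (ψ x.toCircle) < b x) {ε : ENNReal} (hε : ε ≠ 0) :
    ∃ Φ, IsEntireDisc D (ψ 0) Φ ∧
      angleMeasure {x | (x, Φ x.toCircle) ∉ W} ≤ ∫⁻ x, b x ∂angleMeasure + ε := by
  have hε2 : ε / 2 ≠ 0 := (ENNReal.half_pos hε).ne'
  have hψc := continuous_comp_toCircle hψ.continuousOn
  obtain ⟨n, φ, K, hK, hKdisj, hKb, hKε⟩ := exists_isCompact_forall_lt (μ := angleMeasure)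
    (fun φ : {φ : ℂ → F // Differentiable ℂ φ ∧ φ 0 = 0} => upperSemicontinuous_exitMeasure hD hW
      ((hψc.comp continuous_fst).add (φ.2.1.continuous.comp continuous_snd))) hb
    (fun x => by simpa using discMeasure_lt_iff_exists_exitMeasure.1 (hWb x)) hε2
  obtain ⟨Φ, hΦ, hΦb⟩ := exists_isEntireDisc_measure_le_of_forall_exitMeasure_lt hD hψ hψD hW hb
    (fun j => (φ j).2.1) (fun j => (φ j).2.2) hK hKdisj hKb hε2
  refine ⟨Φ, hΦ, hΦb.trans ?_⟩
  calc _ ≤ ∫⁻ x, b x ∂angleMeasure + ε / 2 + ε / 2 := by gcongr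
    _ = ∫⁻ x, b x ∂angleMeasure + ε := by rw [add_assoc, ENNReal.add_halves]

end Gluing

section SubMeanValue

variable {F : Type*} [NormedAddCommGroup F] [NormedSpace ℂ F] {D V : Set F}

lemma integral_angleMeasure (f : Angles → ℝ) :
    ∫ x, f x ∂angleMeasure = 1 / (2 * π) * ∫ θ in (0 : ℝ)..2 * π, f θ := by
  rw [AddCircle.integral_haarAddCircle, ← AddCircle.intervalIntegral_preimage (2 * π) 0, zero_add,
    smul_eq_mul, one_div]

lemma add_mul_mem_closedBall {z w : ℂ} {r : ℝ} (hr : 0 ≤ r) (hw : w ∈ closedBall (0 : ℂ) 1) :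
    z + r * w ∈ closedBall z r := by
  rw [mem_closedBall_iff_norm, add_sub_cancel_left, norm_mul, Complex.norm_real,
    Real.norm_of_nonneg hr]
  exact mul_le_of_le_one_right hr (mem_closedBall_zero_iff.1 hw)

lemma isHoloDisc_comp_add_mul {φ : ℂ → F} {U : Set ℂ} (hU : IsOpen U)
    (hφ : DifferentiableOn ℂ φ U) {z : ℂ} {r : ℝ} (hr : 0 ≤ r) (hrU : closedBall z r ⊆ U) :
    IsHoloDisc (H := F) fun w => φ (z + r * w) := by
  refine isHoloDisc_iff.2 ⟨(fun w : ℂ => z + r * w) ⁻¹' U, hU.preimage (by fun_prop), ?_,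
    hφ.comp (by fun_prop) (mapsTo_preimage _ U)⟩
  exact fun w hw => hrU (add_mul_mem_closedBall hr hw)

lemma measurable_discMeasure_comp_toCircle (hD : IsOpen D) (hV : IsOpen V) {ψ : ℂ → F}
    (hψ : IsHoloDisc (H := F) ψ) : Measurable fun x : Angles => discMeasure D V (ψ x.toCircle) :=
  ((upperSemicontinuous_discMeasure hD hV).comp
    (continuous_comp_toCircle hψ.continuousOn)).measurable

variable [CompleteSpace F]

theorem discMeasure_le_lintegral (hD : IsOpen D) (hV : IsOpen V) {ψ : ℂ → F}
    (hψ : IsHoloDisc (H := F) ψ) (hψD : MapsTo ψ (closedBall 0 1) D) :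
    discMeasure D V (ψ 0) ≤ ∫⁻ x, discMeasure D V (ψ x.toCircle) ∂angleMeasure := by
  have hmeas := measurable_discMeasure_comp_toCircle hD hV hψ
  refine ENNReal.le_of_forall_pos_le_add fun ε hε _ => ?_
  have hε2 : (ε : ENNReal) / 2 ≠ 0 := (ENNReal.half_pos (ENNReal.coe_pos.2 hε).ne').ne'
  obtain ⟨Φ, hΦ, hΦm⟩ := exists_isEntireDisc_measure_le_lintegral hD hψ hψD
    (isOpen_univ.prod hV) (hmeas.add_const (ε / 2 : ENNReal)) (fun x => by
      rw [mk_preimage_prod_right (mem_univ x)]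
      exact ENNReal.lt_add_right (discMeasure_ne_top (hψD (toCircle_mem_closedBall x))) hε2) hε2
  rw [lintegral_add_right _ measurable_const, lintegral_const, measure_univ, mul_one, add_assoc,
    ENNReal.add_halves] at hΦm
  refine (discMeasure_le hΦ).trans (le_trans (measure_mono fun x hx => ?_) hΦm)
  exact fun h => hx h.2

lemma toReal_discMeasure_le_intervalIntegral (hD : IsOpen D) (hV : IsOpen V) {ψ : ℂ → F}
    (hψ : IsHoloDisc (H := F) ψ) (hψD : MapsTo ψ (closedBall 0 1) D) :
    (discMeasure D V (ψ 0)).toReal ≤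
      1 / (2 * π) * ∫ θ in (0 : ℝ)..2 * π, (discMeasure D V (ψ (circleMap 0 1 θ))).toReal := by
  have hle (x : Angles) : discMeasure D V (ψ x.toCircle) ≤ 1 :=
    discMeasure_le_one (hψD (toCircle_mem_closedBall x))
  have hfin : ∫⁻ x, discMeasure D V (ψ x.toCircle) ∂angleMeasure ≠ ⊤ :=
    ne_top_of_le_ne_top ENNReal.one_ne_top
      ((lintegral_mono hle).trans_eq (by rw [lintegral_one, measure_univ]))
  refine (ENNReal.toReal_mono hfin (discMeasure_le_lintegral hD hV hψ hψD)).trans_eq ?_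
  rw [← integral_toReal (measurable_discMeasure_comp_toCircle hD hV hψ).aemeasurable
    (ae_of_all _ fun x => (hle x).trans_lt ENNReal.one_lt_top), integral_angleMeasure]
  simp only [toCircle_coe_angle]

lemma pshOnM_discMeasure (hD : IsOpen D) (hV : IsOpen V) :
    PSHOnM (H := F) (fun z => (discMeasure D V z).toReal) D := by
  refine ⟨fun z hz q hq => ?_, fun φ U hU hφ z r hr hrU hφD => ?_⟩
  · have hzq := (ENNReal.lt_ofReal_iff_toReal_lt (discMeasure_ne_top hz)).2 hq
    filter_upwards [mem_nhdsWithin_of_mem_nhds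
      (upperSemicontinuous_discMeasure hD hV z _ hzq)] with w hw
    exact ENNReal.toReal_lt_of_lt_ofReal hw
  · rw [mdifferentiableOn_iff_differentiableOn] at hφ
    simpa [circleMap] using toReal_discMeasure_le_intervalIntegral hD hV
      (isHoloDisc_comp_add_mul hU hφ hr.le hrU) fun w hw => hφD _ (add_mul_mem_closedBall hr.le hw)

end SubMeanValue

section ALimsup

variable {X : Type*} {u : X → ℝ} {c : ℝ}

-- Nonnegativity of `c` covers the trivial filter, along which the real `limsup` is `0`.
lemma limsup_le_of_eventually_mem_Icc {l : Filter X} (hc : 0 ≤ c) (h : ∀ᶠ x in l, u x ∈ Icc 0 c) :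
    limsup u l ≤ c := by
  rcases l.eq_or_neBot with rfl | hl
  · simpa [limsup_eq] using hc
  · exact limsup_le_of_le (IsCoboundedUnder.of_frequently_ge
      (h.mono fun x hx => hx.1).frequently) (h.mono fun x hx => hx.2)

variable [TopologicalSpace X] {𝒜 : ApproachData X} {a : X} {R : Set X}

lemma ALimsup_le (hc : 0 ≤ c) (h : ∀ R ∈ 𝒜.regions a, ∀ᶠ z in 𝓝[R] a, u z ∈ Icc 0 c) :
    ALimsup 𝒜 u a ≤ c :=
  Real.sSup_le (forall_mem_image.2 fun R hR => limsup_le_of_eventually_mem_Icc hc (h R hR)) hc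

lemma limsup_le_ALimsup (hc : 0 ≤ c) (h : ∀ R ∈ 𝒜.regions a, ∀ᶠ z in 𝓝[R] a, u z ∈ Icc 0 c)
    (hR : R ∈ 𝒜.regions a) : limsup u (𝓝[R] a) ≤ ALimsup 𝒜 u a :=
  le_csSup ⟨c, forall_mem_image.2 fun R hR => limsup_le_of_eventually_mem_Icc hc (h R hR)⟩
    (mem_image_of_mem _ hR)

end ALimsup

section ExtremalFunction

variable {𝒜 : ApproachData M} {A D R : Set M} {a z : M}

lemma pshOnM_zero : PSHOnM (H := H) (fun _ : M => (0 : ℝ)) D :=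
  ⟨upperSemicontinuous_const.upperSemicontinuousOn _, fun _ _ _ _ _ _ _ _ _ => by simp⟩

lemma le_hFunA {u : M → ℝ} (hu : PSHOnM (H := H) u D) (hu_one : ∀ x ∈ D, u x ≤ 1)
    (hu_A : ∀ a ∈ A, ALimsup 𝒜 u a ≤ 0) (hz : z ∈ D) : u z ≤ hFunA (H := H) 𝒜 A D z :=
  le_csSup ⟨1, forall_mem_image.2 fun _ hv => hv.2.1 z hz⟩ ⟨u, ⟨hu, hu_one, hu_A⟩, rfl⟩

lemma hFunA_mem_Icc (hz : z ∈ D) : hFunA (H := H) 𝒜 A D z ∈ Icc 0 1 := by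
  have hzero : ∀ a ∈ A, ALimsup 𝒜 (fun _ => 0) a ≤ 0 := fun a _ =>
    ALimsup_le le_rfl fun _ _ => .of_forall fun _ => ⟨le_rfl, le_rfl⟩
  refine ⟨le_hFunA pshOnM_zero (fun _ _ => zero_le_one) hzero hz, ?_⟩
  exact Real.sSup_le (forall_mem_image.2 fun u hu => hu.2.1 z hz) zero_le_one

lemma eventually_hFunA_mem_Icc (hR : R ⊆ D) :
    ∀ᶠ w in 𝓝[R] z, hFunA (H := H) 𝒜 A D w ∈ Icc 0 1 := by
  filter_upwards [self_mem_nhdsWithin] with w hw using hFunA_mem_Icc (hR hw)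

lemma eventually_hFunA_lt (h𝒜 : ∀ R ∈ 𝒜.regions z, R ⊆ D) {δ : ℝ}
    (hδ : omegaA (H := H) 𝒜 A D z < δ) (hR : R ∈ 𝒜.regions z) :
    ∀ᶠ w in 𝓝[R] z, hFunA (H := H) 𝒜 A D w < δ :=
  eventually_lt_of_limsup_lt
    ((limsup_le_ALimsup zero_le_one (fun R hR => eventually_hFunA_mem_Icc (h𝒜 R hR))
      hR).trans_lt hδ)
    (isBoundedUnder_of_eventually_le
      ((eventually_hFunA_mem_Icc (h𝒜 R hR)).mono fun _ hw => hw.2))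

lemma hFunA_le_omegaA (h𝒜 : ∀ R ∈ 𝒜.regions z, R ⊆ D) (hR : R ∈ 𝒜.regions z) (hz : z ∈ R) :
    hFunA (H := H) 𝒜 A D z ≤ omegaA (H := H) 𝒜 A D z :=
  le_of_forall_gt fun _ hδ => (eventually_hFunA_lt h𝒜 hδ hR).self_of_nhdsWithin hz

end ExtremalFunction

section SmallExtremalSet

variable {F : Type*} [NormedAddCommGroup F] [NormedSpace ℂ F] {𝒜 : ApproachData F}
  {A D V R : Set F} {a z : F} {δ δ' : ℝ}

/-- The points near `A` at which the extremal function of `A`, localized to a ball of radius `δ`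
around some point of `A`, is smaller than `δ`; taking interiors makes the set open. -/
def smallExtremalSet (𝒜 : ApproachData F) (A D : Set F) (δ : ℝ) : Set F :=
  ⋃ a ∈ A, interior {z | z ∈ D ∩ ball a δ ∧
    hFunA (H := F) (𝒜.restrict (ball a δ)) (A ∩ ball a δ) (D ∩ ball a δ) z < δ}

lemma isOpen_smallExtremalSet (δ : ℝ) : IsOpen (smallExtremalSet 𝒜 A D δ) :=
  isOpen_biUnion fun _ _ => isOpen_interior

lemma exists_mem_ball_of_mem_smallExtremalSet (hz : z ∈ smallExtremalSet 𝒜 A D δ) :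
    ∃ a ∈ A, z ∈ D ∩ ball a δ ∧
      hFunA (H := F) (𝒜.restrict (ball a δ)) (A ∩ ball a δ) (D ∩ ball a δ) z < δ := by
  obtain ⟨a, ha, hza⟩ := mem_iUnion₂.1 hz
  have hmem := interior_subset hza
  exact ⟨a, ha, hmem⟩

lemma eventually_mem_smallExtremalSet (h𝒜 : ∀ R ∈ 𝒜.regions a, IsOpen R ∧ R ⊆ D) (ha : a ∈ A)
    (hreg : PlrgAtA (H := F) 𝒜 A D a) (hδ : 0 < δ) (hR : R ∈ 𝒜.regions a) :
    ∀ᶠ z in 𝓝[R] a, z ∈ smallExtremalSet 𝒜 A D δ := by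
  have haU : a ∈ ball a δ := mem_ball_self hδ
  have hlt := eventually_hFunA_lt (z := a) (𝒜 := 𝒜.restrict (ball a δ))
    (forall_mem_image.2 fun R hR => inter_subset_inter_left _ (h𝒜 R hR).2)
    ((hreg _ isOpen_ball haU).trans_lt hδ) (mem_image_of_mem _ hR)
  obtain ⟨O, hO, haO, hOδ⟩ := mem_nhdsWithin.1 hlt
  filter_upwards [inter_mem_nhdsWithin R ((hO.inter isOpen_ball).mem_nhds ⟨haO, haU⟩)]
    with z ⟨hzR, hzO, hzU⟩
  refine mem_iUnion₂.2 ⟨a, ha, mem_interior.2 ⟨O ∩ (R ∩ ball a δ), fun w hw => ?_,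
    hO.inter ((h𝒜 R hR).1.inter isOpen_ball), hzO, hzR, hzU⟩⟩
  exact ⟨⟨(h𝒜 R hR).2 hw.2.1, hw.2.2⟩, hOδ hw⟩

variable [CompleteSpace F]

lemma toReal_discMeasure_le_hFunA (hD : IsOpen D) (hV : IsOpen V)
    (h𝒜 : ∀ a ∈ A, ∀ R ∈ 𝒜.regions a, R ⊆ D)
    (hAV : ∀ a ∈ A, ∀ R ∈ 𝒜.regions a, ∀ᶠ z in 𝓝[R] a, z ∈ V) (hz : z ∈ D) :
    (discMeasure D V z).toReal ≤ hFunA (H := F) 𝒜 A D z := by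
  refine le_hFunA (pshOnM_discMeasure hD hV) (fun x hx => ?_) (fun a ha => ?_) hz
  · exact ENNReal.toReal_le_of_le_ofReal zero_le_one (by simpa using discMeasure_le_one hx)
  · refine ALimsup_le le_rfl fun R hR => ?_
    filter_upwards [hAV a ha R hR, self_mem_nhdsWithin] with w hwV hwR
    simp [discMeasure_eq_zero (h𝒜 a ha R hR hwR) hwV]

lemma discMeasure_smallExtremalSet_lt (hD : IsOpen D)
    (h𝒜 : ∀ ζ, ∀ R ∈ 𝒜.regions ζ, IsOpen R ∧ R ⊆ D)
    (hreg : ∀ a ∈ A, PlrgAtA (H := F) 𝒜 A D a) (hδ' : 0 < δ')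
    (hz : z ∈ smallExtremalSet 𝒜 A D δ) :
    discMeasure (D ∩ ball z (2 * δ)) (smallExtremalSet 𝒜 A D δ') z < ENNReal.ofReal δ := by
  obtain ⟨a, -, hzD, hzδ⟩ := exists_mem_ball_of_mem_smallExtremalSet hz
  have hball : ball a δ ⊆ ball z (2 * δ) :=
    ball_subset (by rw [dist_comm]; linarith [mem_ball.1 hzD.2])
  have hle := toReal_discMeasure_le_hFunA (𝒜 := 𝒜.restrict (ball a δ)) (A := A ∩ ball a δ)
    (hD.inter isOpen_ball) (isOpen_smallExtremalSet (𝒜 := 𝒜) (A := A) (D := D) δ')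
    (fun a' _ => forall_mem_image.2 fun R hR => inter_subset_inter_left _ (h𝒜 a' R hR).2)
    (fun a' ha' => forall_mem_image.2 fun R hR => nhdsWithin_mono _ inter_subset_left
      (eventually_mem_smallExtremalSet (h𝒜 a') ha'.1 (hreg a' ha'.1) hδ' hR)) hzD
  exact (discMeasure_anti (inter_subset_inter_right D hball)).trans_lt
    ((ENNReal.lt_ofReal_iff_toReal_lt (discMeasure_ne_top hzD)).2 (hle.trans_lt hzδ))

end SmallExtremalSet

section MarkedDiscs

lemma isOpen_setOf_mem_ball_and_imp_mem {X Y : Type*} [TopologicalSpace X]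
    [PseudoMetricSpace Y] {f : X → Y} (hf : Continuous f) {C : Set X} (hC : IsClosed C)
    {V : Set Y} (hV : IsOpen V) (r : ℝ) :
    IsOpen {p : X × Y | p.2 ∈ ball (f p.1) r ∧ (p.1 ∈ C → p.2 ∈ V)} := by
  simp only [mem_ball, imp_iff_not_or]
  exact (isOpen_lt (continuous_snd.dist (hf.comp continuous_fst)) continuous_const).inter
    ((hC.isOpen_compl.preimage continuous_fst).union (hV.preimage continuous_snd))

lemma exists_seq_of_forall_exists {α : Type*} {P : ℕ → α → Prop} {r : ℕ → α → α → Prop} {a : α}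
    (ha : P 0 a) (h : ∀ k a, P k a → ∃ b, P (k + 1) b ∧ r k a b) :
    ∃ f : ℕ → α, f 0 = a ∧ ∀ k, P k (f k) ∧ r k (f k) (f (k + 1)) := by
  choose! g hg using h
  have hP (k : ℕ) : P k (Nat.rec a g k) := by
    induction k with
    | zero => exact ha
    | succ k ih => exact (hg k _ ih).1
  exact ⟨fun k => Nat.rec a g k, rfl, fun k => ⟨hP k, (hg k _ (hP k)).2⟩⟩

variable {F : Type*} [NormedAddCommGroup F] [NormedSpace ℂ F] {D V V' : Set F} {z : F} {δ : ℝ}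
  {p : (ℂ → F) × Set Angles} {q : ENNReal}

/-- A pair of an entire disc in `D` centred at `z` and a closed set of angles which the disc sends
to `V`. -/
structure IsMarkedDisc (D V : Set F) (z : F) (p : (ℂ → F) × Set Angles) : Prop where
  isEntireDisc : IsEntireDisc D z p.1
  isClosed : IsClosed p.2
  mem : ∀ x ∈ p.2, p.1 x.toCircle ∈ V

/-- The modification step of the construction, from the marked disc `p` to the marked disc `p'`:
the boundary values are moved by less than `2 * δ`, and the marked angles are kept, up to angles of
measure controlled by `δ`. -/
structure IsRefinement (δ : ℝ) (p p' : (ℂ → F) × Set Angles) : Prop where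
  subset : p'.2 ⊆ p.2
  measure_compl_le : angleMeasure p'.2ᶜ ≤ angleMeasure p.2ᶜ + 3 * ENNReal.ofReal δ
  measure_norm_sub_le :
    angleMeasure {x | 2 * δ ≤ ‖p'.1 x.toCircle - p.1 x.toCircle‖} ≤ 2 * ENNReal.ofReal δ

lemma exists_isMarkedDisc (hV : IsOpen V) (hq : discMeasure D V z < q) :
    ∃ p, IsMarkedDisc D V z p ∧ angleMeasure p.2ᶜ < q := by
  obtain ⟨φ, hφ, hφq⟩ := discMeasure_lt_iff.1 hq
  obtain ⟨C, hCV, hC, hCq⟩ := exists_isCompact_measure_compl_lt angleMeasure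
    (hV.preimage (continuous_comp_toCircle hφ.isHoloDisc.continuousOn)).measurableSet hφq
  exact ⟨(φ, C), ⟨hφ, hC.isClosed, hCV⟩, hCq⟩

variable [CompleteSpace F]

lemma IsMarkedDisc.exists_isEntireDisc_measure_le (hp : IsMarkedDisc D V z p) (hD : IsOpen D)
    (hV' : IsOpen V') (hδ : 0 < δ)
    (hVV' : ∀ y ∈ V, discMeasure (D ∩ ball y (2 * δ)) V' y < ENNReal.ofReal δ) :
    ∃ Φ, IsEntireDisc D z Φ ∧ angleMeasure
      {x | Φ x.toCircle ∈ ball (p.1 x.toCircle) (2 * δ) ∧ (x ∈ p.2 → Φ x.toCircle ∈ V')}ᶜ ≤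
        2 * ENNReal.ofReal δ := by
  obtain ⟨φ, C⟩ := p
  obtain ⟨hφ, hC, hCV⟩ := hp
  have hδ0 : ENNReal.ofReal δ ≠ 0 := (ENNReal.ofReal_pos.2 hδ).ne'
  have hφc := continuous_comp_toCircle hφ.isHoloDisc.continuousOn
  have hW := isOpen_setOf_mem_ball_and_imp_mem hφc hC hV' (2 * δ)
  have hfibre (x : Angles) : discMeasure D
      {y | y ∈ ball (φ x.toCircle) (2 * δ) ∧ (x ∈ C → y ∈ V')} (φ x.toCircle) <
        ENNReal.ofReal δ := by
    by_cases hx : x ∈ C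
    · simp only [hx, forall_const]
      exact (discMeasure_inter_le D V').trans_lt (hVV' _ (hCV x hx))
    · refine (discMeasure_eq_zero (hφ.mapsTo (toCircle_mem_closedBall x)) ?_).trans_lt
        (ENNReal.ofReal_pos.2 hδ)
      exact ⟨mem_ball_self (by positivity), fun h => absurd h hx⟩
  obtain ⟨Φ, hΦ, hΦδ⟩ := exists_isEntireDisc_measure_le_lintegral hD hφ.isHoloDisc hφ.mapsTo hW
    measurable_const hfibre hδ0
  rw [hφ.map_zero] at hΦ
  refine ⟨Φ, hΦ, hΦδ.trans_eq ?_⟩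
  rw [lintegral_const, measure_univ, mul_one, two_mul]

lemma IsMarkedDisc.exists_isRefinement (hp : IsMarkedDisc D V z p) (hD : IsOpen D)
    (hV' : IsOpen V') (hδ : 0 < δ)
    (hVV' : ∀ y ∈ V, discMeasure (D ∩ ball y (2 * δ)) V' y < ENNReal.ofReal δ) :
    ∃ p', IsMarkedDisc D V' z p' ∧ IsRefinement δ p p' := by
  obtain ⟨Φ, hΦ, hΦδ⟩ := hp.exists_isEntireDisc_measure_le hD hV' hδ hVV'
  have hΦc := continuous_comp_toCircle hΦ.isHoloDisc.continuousOn
  have hpc := continuous_comp_toCircle hp.isEntireDisc.isHoloDisc.continuousOn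
  set S := {x : Angles | Φ x.toCircle ∈ ball (p.1 x.toCircle) (2 * δ) ∧
    (x ∈ p.2 → Φ x.toCircle ∈ V')}
  have hS : IsOpen S := (isOpen_setOf_mem_ball_and_imp_mem hpc hp.isClosed hV' (2 * δ)).preimage
    (continuous_id.prodMk hΦc)
  have hlt : angleMeasure (p.2 ∩ S)ᶜ < angleMeasure p.2ᶜ + 3 * ENNReal.ofReal δ := calc
    angleMeasure (p.2 ∩ S)ᶜ ≤ angleMeasure p.2ᶜ + 2 * ENNReal.ofReal δ := by
      rw [compl_inter]
      exact (measure_union_le _ _).trans (by gcongr)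
    _ < angleMeasure p.2ᶜ + 3 * ENNReal.ofReal δ := by
      refine ENNReal.add_lt_add_left (measure_ne_top _ _) ?_
      exact ENNReal.mul_lt_mul_left (ENNReal.ofReal_pos.2 hδ).ne' ENNReal.ofReal_ne_top
        (by norm_num)
  obtain ⟨C', hC'S, hC', hC'lt⟩ := exists_isCompact_measure_compl_lt angleMeasure
    (hp.isClosed.measurableSet.inter hS.measurableSet) hlt
  refine ⟨(Φ, C'), ⟨hΦ, hC'.isClosed, fun x hx => (hC'S hx).2.2 (hC'S hx).1⟩,
    fun x hx => (hC'S hx).1, hC'lt.le, (measure_mono fun x hx hxS => ?_).trans hΦδ⟩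
  exact (mem_ball_iff_norm.1 hxS.1).not_ge hx

end MarkedDiscs

section Convergence

lemma ae_exists_tendsto_of_tsum_measure_ne_top {α E : Type*} {m : MeasurableSpace α} {μ : Measure α}
    [NormedAddCommGroup E] [CompleteSpace E] {f : ℕ → α → E} {δ : ℕ → ℝ} (hδ : Summable δ)
    (h : ∑' k, μ {x | δ k ≤ ‖f (k + 1) x - f k x‖} ≠ ⊤) :
    ∀ᵐ x ∂μ, ∃ L, Tendsto (fun k => f k x) atTop (𝓝 L) := by
  filter_upwards [ae_eventually_notMem h] with x hx
  obtain ⟨N, hN⟩ := eventually_atTop.1 hx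
  have hdist (k : ℕ) : dist (f (k + N) x) (f (k + 1 + N) x) ≤ δ (k + N) := by
    rw [dist_comm, dist_eq_norm, add_right_comm]
    exact (not_le.1 (hN (k + N) (Nat.le_add_left N k))).le
  obtain ⟨L, hL⟩ := cauchySeq_tendsto_of_complete
    (cauchySeq_of_dist_le_of_summable _ hdist ((summable_nat_add_iff N).2 hδ))
  exact ⟨L, (tendsto_add_atTop_iff_nat N).1 hL⟩

lemma measure_compl_iInter_le {α : Type*} {m : MeasurableSpace α} {μ : Measure α}
    {C : ℕ → Set α} (hC : ∀ k, C (k + 1) ⊆ C k) {d : ℕ → ENNReal}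
    (h : ∀ k, μ (C (k + 1))ᶜ ≤ μ (C k)ᶜ + d k) :
    μ (⋂ k, C k)ᶜ ≤ μ (C 0)ᶜ + ∑' k, d k := by
  have hsum (k : ℕ) : μ (C k)ᶜ ≤ μ (C 0)ᶜ + ∑ i ∈ Finset.range k, d i := by
    induction k with
    | zero => simp
    | succ k ih =>
      rw [Finset.sum_range_succ, ← add_assoc]
      exact (h k).trans (add_le_add_left ih _)
  rw [compl_iInter, Monotone.measure_iUnion
    (monotone_nat_of_le_succ fun k => compl_subset_compl.2 (hC k))]
  exact iSup_le fun k => (hsum k).trans (add_le_add_right (ENNReal.sum_le_tsum _) _)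

lemma exists_tsum_ofReal_eq {c : ℝ} (hc : 0 < c) :
    ∃ δ : ℕ → ℝ, (∀ k, 0 < δ k) ∧ Summable δ ∧
      ∑' k, ENNReal.ofReal (δ k) = ENNReal.ofReal c := by
  have hsum : HasSum (fun k : ℕ => c / 2 / 2 ^ k) c := hasSum_geometric_two' c
  refine ⟨_, fun k => by positivity, hsum.summable, ?_⟩
  rw [← ENNReal.ofReal_tsum_of_nonneg (fun k => by positivity) hsum.summable, hsum.tsum_eq]

variable {F : Type*} [NormedAddCommGroup F] [NormedSpace ℂ F] {𝒜 : ApproachData F} {A D : Set F}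

lemma mem_closure_of_tendsto_smallExtremalSet {f : ℕ → F} {L : F} (hL : Tendsto f atTop (𝓝 L))
    {δ : ℕ → ℝ} (hδ : Tendsto δ atTop (𝓝 0)) (hf : ∀ k, f k ∈ smallExtremalSet 𝒜 A D (δ k)) :
    L ∈ closure A := by
  choose a ha hfa _ using fun k => exists_mem_ball_of_mem_smallExtremalSet (hf k)
  have hdist : Tendsto (fun k => dist (f k) (a k)) atTop (𝓝 0) :=
    squeeze_zero (fun k => dist_nonneg) (fun k => (mem_ball.1 (hfa k).2).le) hδ
  exact mem_closure_of_tendsto ((tendsto_iff_of_dist hdist).1 hL) (.of_forall ha)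

lemma omegaA_nonneg (h𝒜 : IsApproachSystem D 𝒜) {z : F} (hz : z ∈ D) :
    0 ≤ omegaA (H := F) 𝒜 A D z := by
  obtain ⟨R, hR, hzR, -⟩ := h𝒜.2.2.1 z hz univ isOpen_univ (mem_univ z)
  exact (hFunA_mem_Icc hz).1.trans (hFunA_le_omegaA (fun R hR => (h𝒜.2.1 z R hR).2) hR hzR)

variable [CompleteSpace F]

lemma discMeasure_smallExtremalSet_le_omegaA (hD : IsOpen D) (h𝒜 : IsApproachSystem D 𝒜)
    (hreg : ∀ a ∈ A, PlrgAtA (H := F) 𝒜 A D a) {z : F} (hz : z ∈ D) {δ : ℝ} (hδ : 0 < δ) :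
    discMeasure D (smallExtremalSet 𝒜 A D δ) z ≤ ENNReal.ofReal (omegaA (H := F) 𝒜 A D z) := by
  obtain ⟨R, hR, hzR, -⟩ := h𝒜.2.2.1 z hz univ isOpen_univ (mem_univ z)
  rw [← ENNReal.ofReal_toReal (discMeasure_ne_top hz)]
  refine ENNReal.ofReal_le_ofReal ((toReal_discMeasure_le_hFunA hD (isOpen_smallExtremalSet δ)
    (fun a _ R hR => (h𝒜.2.1 a R hR).2) (fun a ha R hR => ?_) hz).trans
      (hFunA_le_omegaA (fun R hR => (h𝒜.2.1 z R hR).2) hR hzR))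
  exact eventually_mem_smallExtremalSet (h𝒜.2.1 a) ha (hreg a ha) hδ hR

lemma exists_convergent_isEntireDisc (hD : IsOpen D) (h𝒜 : IsApproachSystem D 𝒜)
    (hreg : ∀ a ∈ A, PlrgAtA (H := F) 𝒜 A D a) {z : F} (hz : z ∈ D) {ε : ℝ} (hε : 0 < ε) :
    ∃ (Φ : ℕ → ℂ → F) (Γ : Set Angles), IsClosed Γ ∧ (∀ k, IsEntireDisc D z (Φ k)) ∧
      (∀ᵐ x ∂angleMeasure, ∃ L, Tendsto (fun k => Φ k x.toCircle) atTop (𝓝 L) ∧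
        (x ∈ Γ → L ∈ closure A)) ∧
      angleMeasure Γᶜ < ENNReal.ofReal (omegaA (H := F) 𝒜 A D z + ε) := by
  obtain ⟨δ, hδ, hδsum, htsum⟩ := exists_tsum_ofReal_eq (by positivity : 0 < ε / 6)
  have hω : 0 ≤ omegaA (H := F) 𝒜 A D z := omegaA_nonneg h𝒜 hz
  have hlt := (discMeasure_smallExtremalSet_le_omegaA hD h𝒜 hreg hz (hδ 0)).trans_lt
    (ENNReal.ofReal_lt_ofReal_iff_of_nonneg hω |>.2 (lt_add_of_pos_right _ (half_pos hε)))
  obtain ⟨p₀, hp₀, hp₀lt⟩ := exists_isMarkedDisc (isOpen_smallExtremalSet (δ 0)) hlt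
  obtain ⟨p, rfl, hp⟩ := exists_seq_of_forall_exists hp₀ (r := fun k => IsRefinement (δ k))
    (P := fun k => IsMarkedDisc D (smallExtremalSet 𝒜 A D (δ k)) z) fun k p hp =>
      hp.exists_isRefinement hD (isOpen_smallExtremalSet (δ (k + 1))) (hδ k) fun y hy =>
        discMeasure_smallExtremalSet_lt hD h𝒜.2.1 hreg (hδ (k + 1)) hy
  refine ⟨fun k => (p k).1, ⋂ k, (p k).2, isClosed_iInter fun k => (hp k).1.isClosed,
    fun k => (hp k).1.isEntireDisc, ?_, ?_⟩
  · have hfin : ∑' k, 2 * ENNReal.ofReal (δ k) ≠ ⊤ := by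
      rw [ENNReal.tsum_mul_left, htsum]
      exact ENNReal.mul_ne_top ENNReal.ofNat_ne_top ENNReal.ofReal_ne_top
    filter_upwards [ae_exists_tendsto_of_tsum_measure_ne_top
      (f := fun k (x : Angles) => (p k).1 x.toCircle) (hδsum.mul_left 2) (ne_top_of_le_ne_top hfin
        (ENNReal.tsum_le_tsum fun k => (hp k).2.measure_norm_sub_le))] with x ⟨L, hL⟩
    exact ⟨L, hL, fun hx => mem_closure_of_tendsto_smallExtremalSet hL hδsum.tendsto_atTop_zero
      fun k => (hp k).1.mem x (mem_iInter.1 hx k)⟩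
  · calc angleMeasure (⋂ k, (p k).2)ᶜ
        ≤ angleMeasure (p 0).2ᶜ + ∑' k, 3 * ENNReal.ofReal (δ k) :=
          measure_compl_iInter_le (fun k => (hp k).2.subset) fun k => (hp k).2.measure_compl_le
      _ < ENNReal.ofReal (omegaA (H := F) 𝒜 A D z + ε / 2) + ENNReal.ofReal (3 * (ε / 6)) := by
          rw [ENNReal.tsum_mul_left, htsum, ENNReal.ofReal_mul zero_le_three, ENNReal.ofReal_ofNat]
          exact ENNReal.add_lt_add_right
            (ENNReal.mul_ne_top ENNReal.ofNat_ne_top ENNReal.ofReal_ne_top) hp₀lt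
      _ = ENNReal.ofReal (omegaA (H := F) 𝒜 A D z + ε) := by
          rw [← ENNReal.ofReal_add (by positivity) (by positivity)]
          ring_nf

end Convergence

section Poisson

lemma poissonKernel_nonneg {t z : ℂ} (ht : t ∈ ball (0 : ℂ) 1) (hz : ‖z‖ = 1) :
    0 ≤ poissonKernel 0 t z := by
  have ht : ‖t‖ < 1 := by simpa using ht
  rw [poissonKernel_def, sub_zero, sub_zero, hz]
  have : ‖t‖ ^ 2 ≤ 1 := pow_le_one₀ (norm_nonneg _) ht.le
  exact div_nonneg (by linarith) (by positivity)

lemma poissonKernel_le {t z : ℂ} (ht : t ∈ ball (0 : ℂ) 1) (hz : ‖z‖ = 1) :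
    poissonKernel 0 t z ≤ (1 + ‖t‖) / (1 - ‖t‖) := by
  rw [poissonKernel_eq_re_herglotzRieszKernel]
  simpa [herglotzRieszKernel_def] using re_herglotzRieszKernel_le (by simpa using hz) ht

lemma continuousOn_poissonKernel_sphere {t : ℂ} (ht : t ∈ ball (0 : ℂ) 1) :
    ContinuousOn (poissonKernel 0 t) (sphere 0 |1|) := by
  rw [poissonKernel_eq_re_herglotzRieszKernel]
  exact continuous_re.comp_continuousOn (continuousOn_herglotzRieszKernel_sphere ht)

variable {F : Type*} [NormedAddCommGroup F]

lemma circleIntegrable_of_ae_norm_le {f : ℂ → F} {C : ℝ}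
    (hfm : AEStronglyMeasurable fun θ : ℝ => f (circleMap 0 1 θ))
    (hfC : ∀ᵐ θ : ℝ, ‖f (circleMap 0 1 θ)‖ ≤ C) : CircleIntegrable f 0 1 := by
  rw [CircleIntegrable, intervalIntegrable_iff]
  exact Measure.integrableOn_of_bounded (by simp [ENNReal.mul_eq_top]) hfm (ae_restrict_of_ae hfC)

lemma ae_norm_le_of_ae_tendsto {α : Type*} [MeasurableSpace α] {μ : Measure α}
    {Φ : ℕ → α → F} {f : α → F} {C : ℝ} (hC : ∀ k x, ‖Φ k x‖ ≤ C)
    (hf : ∀ᵐ x ∂μ, Tendsto (fun k => Φ k x) atTop (𝓝 (f x))) : ∀ᵐ x ∂μ, ‖f x‖ ≤ C :=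
  hf.mono fun x hx => le_of_tendsto' hx.norm fun k => hC k x

lemma tendsto_circleAverage_norm_sub {Φ : ℕ → ℂ → F} {f : ℂ → F} {C : ℝ}
    (hΦ : ∀ k, Continuous (Φ k)) (hC : ∀ k z, ‖z‖ = 1 → ‖Φ k z‖ ≤ C)
    (hfm : AEStronglyMeasurable fun θ : ℝ => f (circleMap 0 1 θ))
    (hfC : ∀ᵐ θ : ℝ, ‖f (circleMap 0 1 θ)‖ ≤ C)
    (hf : ∀ᵐ θ : ℝ, Tendsto (fun k => Φ k (circleMap 0 1 θ)) atTop (𝓝 (f (circleMap 0 1 θ)))) :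
    Tendsto (fun k => Real.circleAverage (fun z => ‖Φ k z - f z‖) 0 1) atTop (𝓝 0) := by
  have hlim : Tendsto (fun k => ∫ θ in (0 : ℝ)..2 * π, ‖Φ k (circleMap 0 1 θ) -
      f (circleMap 0 1 θ)‖) atTop (𝓝 (∫ _ in (0 : ℝ)..2 * π, (0 : ℝ))) := by
    refine intervalIntegral.tendsto_integral_filter_of_dominated_convergence (fun _ => C + C)
      (Eventually.of_forall fun k => ?_) (Eventually.of_forall fun k => ?_)
      intervalIntegrable_const ?_
    · exact (((hΦ k).comp (continuous_circleMap 0 1)).aestronglyMeasurable.sub hfm.restrict).norm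
    · filter_upwards [hfC] with θ hθ _
      rw [norm_norm]
      exact (norm_sub_le _ _).trans (add_le_add (hC k _ (by simp)) hθ)
    · filter_upwards [hf] with θ hθ _
      exact tendsto_iff_norm_sub_tendsto_zero.1 hθ
  simpa [Real.circleAverage_def] using hlim.const_mul (2 * π)⁻¹

variable [NormedSpace ℂ F] {f : ℂ → F}

lemma circleIntegrable_poissonKernel_smul {t : ℂ} (ht : t ∈ ball (0 : ℂ) 1)
    (hf : CircleIntegrable f 0 1) : CircleIntegrable (poissonKernel 0 t • f) 0 1 :=
  hf.continuousOn_smul (continuousOn_poissonKernel_sphere ht)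

lemma norm_circleAverage_poissonKernel_smul_le {t : ℂ} (ht : t ∈ ball (0 : ℂ) 1)
    (hf : CircleIntegrable f 0 1) :
    ‖Real.circleAverage (poissonKernel 0 t • f) 0 1‖ ≤
      (1 + ‖t‖) / (1 - ‖t‖) * Real.circleAverage (fun z => ‖f z‖) 0 1 := by
  have : 0 ≤ (1 + ‖t‖) / (1 - ‖t‖) :=
    (poissonKernel_nonneg ht norm_one).trans (poissonKernel_le ht norm_one)
  simp only [Real.circleAverage_def, norm_smul, smul_eq_mul]
  rw [Real.norm_of_nonneg (by positivity), mul_left_comm, ← intervalIntegral.integral_const_mul]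
  gcongr
  refine intervalIntegral.norm_integral_le_of_norm_le (by positivity)
    (Eventually.of_forall fun θ _ => ?_) (IntervalIntegrable.norm hf |>.const_mul _)
  rw [Pi.smul_apply', norm_smul, Real.norm_of_nonneg (poissonKernel_nonneg ht (by simp))]
  gcongr
  exact poissonKernel_le ht (by simp)

variable [CompleteSpace F]

lemma norm_sub_circleAverage_poissonKernel_smul_le {Φ : ℂ → F} (hΦ : Differentiable ℂ Φ) {t : ℂ}
    (ht : t ∈ ball (0 : ℂ) 1) (hf : CircleIntegrable f 0 1) :
    ‖Φ t - Real.circleAverage (poissonKernel 0 t • f) 0 1‖ ≤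
      (1 + ‖t‖) / (1 - ‖t‖) * Real.circleAverage (fun z => ‖Φ z - f z‖) 0 1 := by
  have hΦi : CircleIntegrable Φ 0 1 := hΦ.continuous.continuousOn.circleIntegrable zero_le_one
  rw [← hΦ.diffContOnCl.circleAverage_poissonKernel_smul ht,
    ← Real.circleAverage_sub (circleIntegrable_poissonKernel_smul ht hΦi)
      (circleIntegrable_poissonKernel_smul ht hf), ← smul_sub]
  exact norm_circleAverage_poissonKernel_smul_le ht (hΦi.sub hf)

lemma tendstoLocallyUniformlyOn_circleAverage_poissonKernel_smul {Φ : ℕ → ℂ → F}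
    (hΦ : ∀ k, Differentiable ℂ (Φ k)) (hf : CircleIntegrable f 0 1)
    (h : Tendsto (fun k => Real.circleAverage (fun z => ‖Φ k z - f z‖) 0 1) atTop (𝓝 0)) :
    TendstoLocallyUniformlyOn Φ (fun t => Real.circleAverage (poissonKernel 0 t • f) 0 1) atTop
      (ball 0 1) := by
  rw [tendstoLocallyUniformlyOn_iff_forall_isCompact isOpen_ball]
  intro K hK hKc
  have hcont : ContinuousOn (fun t : ℂ => (1 + ‖t‖) / (1 - ‖t‖)) K :=
    ContinuousOn.div (by fun_prop) (by fun_prop) fun t ht =>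
      (sub_pos.2 (by simpa using hK ht)).ne'
  obtain ⟨C, hC⟩ := hKc.bddAbove_image hcont
  have hC' : Tendsto (fun k => C * Real.circleAverage (fun z => ‖Φ k z - f z‖) 0 1) atTop
      (𝓝 0) := by simpa using h.const_mul C
  rw [Metric.tendstoUniformlyOn_iff]
  intro ε hε
  filter_upwards [hC'.eventually_lt_const hε] with k hk t ht
  rw [dist_comm, dist_eq_norm]
  refine ((norm_sub_circleAverage_poissonKernel_smul_le (hΦ k) (hK ht) hf).trans ?_).trans_lt hk
  gcongr
  · exact Real.circleAverage_nonneg_of_nonneg fun _ _ => norm_nonneg _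
  · exact hC (mem_image_of_mem _ ht)

end Poisson

section Fatou

lemma norm_sub_mul_cos_le {α : ℝ} (hα : α < π / 2) {ζ t : ℂ} (hζ : ‖ζ‖ = 1)
    (ht : t ∈ stolzRegion α ζ) (hd : ‖ζ - t‖ ≤ Real.cos α) :
    ‖ζ - t‖ * Real.cos α ≤ 2 * (1 - ‖t‖) := by
  obtain ⟨htb, harg⟩ := ht
  have htb : ‖t‖ < 1 := by simpa using htb
  have hζ0 : ζ ≠ 0 := by rintro rfl; simp at hζ
  set w := (ζ - t) / ζ with hw
  have hwn : ‖w‖ = ‖ζ - t‖ := by rw [hw, norm_div, hζ, div_one]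
  have htw : ‖t‖ = ‖1 - w‖ := by
    have : t = ζ * (1 - w) := by rw [hw]; field_simp; ring
    rw [this, norm_mul, hζ, one_mul]
  have hre : ‖ζ - t‖ * Real.cos α ≤ w.re := by
    rw [← Complex.norm_mul_cos_arg w, hwn, ← Real.cos_abs w.arg]
    gcongr
    exact Real.cos_le_cos_of_nonneg_of_le_pi (abs_nonneg _) (by linarith [Real.pi_pos]) harg.le
  have hsq : ‖t‖ ^ 2 = 1 - 2 * w.re + ‖ζ - t‖ ^ 2 := by
    rw [htw, ← hwn, ← Complex.normSq_eq_norm_sq, ← Complex.normSq_eq_norm_sq,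
      Complex.normSq_apply, Complex.normSq_apply, sub_re, sub_im, one_re, one_im]
    ring
  nlinarith [norm_nonneg t, norm_nonneg (ζ - t), mul_le_mul_of_nonneg_left hd (norm_nonneg (ζ - t))]

lemma tendsto_norm_sub_stolzRegion (α : ℝ) {ζ : ℂ} (hζ : ‖ζ‖ = 1) :
    Tendsto (fun t => ‖ζ - t‖) (𝓝[stolzRegion α ζ] ζ) (𝓝[>] 0) := by
  refine tendsto_nhdsWithin_iff.2 ⟨?_, ?_⟩
  · have : Continuous fun t => ‖ζ - t‖ := by fun_prop
    simpa using (this.tendsto ζ).mono_left nhdsWithin_le_nhds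
  · filter_upwards [self_mem_nhdsWithin] with t ht
    refine norm_pos_iff.2 (sub_ne_zero.2 ?_)
    rintro rfl
    simpa [hζ] using ht.1

lemma eventually_mul_norm_sub_le_stolzRegion {α : ℝ} (hα0 : 0 < α) (hα : α < π / 2) {ζ : ℂ}
    (hζ : ‖ζ‖ = 1) : ∀ᶠ t in 𝓝[stolzRegion α ζ] ζ, Real.cos α / 2 * ‖ζ - t‖ ≤ 1 - ‖t‖ := by
  have hcos : 0 < Real.cos α := Real.cos_pos_of_mem_Ioo ⟨by linarith, hα⟩
  have hdist := (tendsto_nhdsWithin_iff.1 (tendsto_norm_sub_stolzRegion α hζ)).1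
  filter_upwards [self_mem_nhdsWithin, hdist.eventually_lt_const hcos] with t ht htd
  linarith [norm_sub_mul_cos_le hα hζ ht htd.le]

lemma one_sub_norm_le_norm_sub {ζ : ℂ} (hζ : ‖ζ‖ = 1) (t : ℂ) : 1 - ‖t‖ ≤ ‖ζ - t‖ := by
  simpa [hζ] using norm_sub_norm_le ζ t

lemma poissonKernel_mul_sq_le {ζ t z : ℂ} {r : ℝ} (hζ : ‖ζ‖ = 1) (hz : ‖z‖ = 1)
    (ht : t ∈ ball (0 : ℂ) 1) (hr : 0 ≤ r) (hrt : r ≤ ‖z - t‖) :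
    poissonKernel 0 t z * r ^ 2 ≤ 2 * ‖ζ - t‖ := by
  have ht : ‖t‖ < 1 := by simpa using ht
  have hζt := one_sub_norm_le_norm_sub hζ t
  have hzt := one_sub_norm_le_norm_sub hz t
  have hpos : 0 < ‖z - t‖ := by linarith
  rw [poissonKernel_def, sub_zero, sub_zero, hz, one_pow, div_mul_eq_mul_div,
    div_le_iff₀ (by positivity)]
  have hnum : 1 - ‖t‖ ^ 2 ≤ 2 * ‖ζ - t‖ := by nlinarith [norm_nonneg t]
  gcongr

lemma poissonKernel_le_div {c : ℝ} (hc : 0 < c) {ζ t z : ℂ} (hζ : ‖ζ‖ = 1) (hz : ‖z‖ = 1)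
    (ht : t ∈ ball (0 : ℂ) 1) (hct : c * ‖ζ - t‖ ≤ 1 - ‖t‖) :
    poissonKernel 0 t z ≤ 2 / (c ^ 2 * ‖ζ - t‖) := by
  have hd : 0 < ‖ζ - t‖ :=
    (sub_pos.2 (by simpa using ht)).trans_le (one_sub_norm_le_norm_sub hζ t)
  have hP := poissonKernel_mul_sq_le hζ hz ht (r := c * ‖ζ - t‖) (by positivity)
    (hct.trans (one_sub_norm_le_norm_sub hz t))
  rw [le_div_iff₀ (by positivity)]
  exact le_of_mul_le_mul_right (by linarith) hd

lemma poissonKernel_mul_norm_sub_sq_le {c : ℝ} (hc : 0 < c) (hc1 : c ≤ 1) {ζ t z : ℂ}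
    (hζ : ‖ζ‖ = 1) (hz : ‖z‖ = 1) (ht : t ∈ ball (0 : ℂ) 1) (hct : c * ‖ζ - t‖ ≤ 1 - ‖t‖) :
    poissonKernel 0 t z * (c * ‖z - ζ‖) ^ 2 ≤ 8 * ‖ζ - t‖ := by
  have htri : ‖z - ζ‖ ≤ ‖z - t‖ + ‖ζ - t‖ := by
    simpa [norm_sub_rev t ζ] using norm_sub_le_norm_sub_add_norm_sub z t ζ
  have hr : c * ‖z - ζ‖ / 2 ≤ ‖z - t‖ := by
    nlinarith [one_sub_norm_le_norm_sub hz t, norm_nonneg (z - t)]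
  have hP := poissonKernel_mul_sq_le hζ hz ht (by positivity) hr
  linarith

lemma mul_abs_sub_le_norm_circleMap_sub {s x : ℝ} (h : |s - x| ≤ π) :
    2 / π * |s - x| ≤ ‖circleMap 0 1 s - circleMap 0 1 x‖ := by
  have hrot : circleMap 0 1 s - circleMap 0 1 x =
      exp (x * I) * (exp (I * ((s - x : ℝ) : ℂ)) - 1) := by
    simp only [circleMap, zero_add, ofReal_one, one_mul, mul_sub, mul_one, ← Complex.exp_add]
    congr 2
    push_cast
    ring
  have habs : |(s - x) / 2| = |s - x| / 2 := by rw [abs_div, abs_two]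
  have hsin := Real.mul_abs_le_abs_sin (x := (s - x) / 2) (by rw [habs]; linarith)
  rw [habs] at hsin
  rw [hrot, norm_mul, norm_exp_ofReal_mul_I, one_mul, Complex.norm_exp_I_mul_ofReal_sub_one,
    norm_mul, Real.norm_eq_abs, Real.norm_eq_abs, abs_two]
  linarith

lemma poissonKernel_circleMap_le {c : ℝ} (hc : 0 < c) (hc1 : c ≤ 1) {t : ℂ} {x s R : ℝ}
    (ht : t ∈ ball (0 : ℂ) 1) (hct : c * ‖circleMap 0 1 x - t‖ ≤ 1 - ‖t‖) (hR : 0 < R)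
    (hRs : R ≤ |s - x|) (hs : |s - x| ≤ π) :
    poissonKernel 0 t (circleMap 0 1 s) ≤
      4 * π ^ 2 * ‖circleMap 0 1 x - t‖ / c ^ 2 * (R ^ 2 + (s - x) ^ 2)⁻¹ := by
  have hP0 := poissonKernel_nonneg ht (z := circleMap 0 1 s) (by simp)
  have hsq : R ^ 2 + (s - x) ^ 2 ≤ 2 * |s - x| ^ 2 := by
    rw [← sq_abs (s - x)]; nlinarith
  have hP : poissonKernel 0 t (circleMap 0 1 s) * (c * (2 / π * |s - x|)) ^ 2 ≤
      8 * ‖circleMap 0 1 x - t‖ := by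
    refine le_trans ?_ (poissonKernel_mul_norm_sub_sq_le (z := circleMap 0 1 s) hc hc1
      (by simp) (by simp) ht hct)
    gcongr
    exact mul_abs_sub_le_norm_circleMap_sub hs
  set P := poissonKernel 0 t (circleMap 0 1 s)
  rw [← div_eq_mul_inv, le_div_iff₀ (by positivity), le_div_iff₀ (by positivity)]
  calc P * (R ^ 2 + (s - x) ^ 2) * c ^ 2
      ≤ P * (2 * |s - x| ^ 2) * c ^ 2 := by gcongr
    _ = P * (c * (2 / π * |s - x|)) ^ 2 * (π ^ 2 / 2) := by field_simp
    _ ≤ 8 * ‖circleMap 0 1 x - t‖ * (π ^ 2 / 2) := by gcongr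
    _ = 4 * π ^ 2 * ‖circleMap 0 1 x - t‖ := by ring

lemma poissonKernel_mul_le {c : ℝ} (hc : 0 < c) (hc1 : c ≤ 1) {t : ℂ} {x s R h C : ℝ}
    (ht : t ∈ ball (0 : ℂ) 1) (hct : c * ‖circleMap 0 1 x - t‖ ≤ 1 - ‖t‖) (hR : 0 < R)
    (hs : |s - x| ≤ π) (hh : 0 ≤ h) (hC : h ≤ C) :
    poissonKernel 0 t (circleMap 0 1 s) * h ≤
      2 / (c ^ 2 * ‖circleMap 0 1 x - t‖) * (closedBall x R).indicator (fun _ => h) s +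
      4 * π ^ 2 * ‖circleMap 0 1 x - t‖ / c ^ 2 * C * (R ^ 2 + (s - x) ^ 2)⁻¹ := by
  have hC0 : 0 ≤ C := hh.trans hC
  by_cases hsR : s ∈ closedBall x R
  · rw [indicator_of_mem hsR]
    refine le_add_of_le_of_nonneg ?_ (by positivity)
    gcongr
    exact poissonKernel_le_div hc (by simp) (by simp) ht hct
  · have hRs : R ≤ |s - x| := by
      simpa [Real.dist_eq] using (not_le.1 (mt mem_closedBall.2 hsR)).le
    rw [indicator_of_notMem hsR, mul_zero, zero_add, mul_right_comm]
    gcongr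
    exact poissonKernel_circleMap_le hc hc1 ht hct hR hRs hs

lemma integral_inv_sq_add_sub_sq_le {R : ℝ} (hR : 0 < R) (a b x : ℝ) :
    ∫ s in a..b, (R ^ 2 + (s - x) ^ 2)⁻¹ ≤ R⁻¹ * π := by
  rw [intervalIntegral.integral_comp_sub_right (fun u => (R ^ 2 + u ^ 2)⁻¹),
    integral_inv_sq_add_sq hR.ne']
  gcongr
  linarith [Real.arctan_lt_pi_div_two ((b - x) / R), Real.neg_pi_div_two_lt_arctan ((a - x) / R)]

lemma integral_indicator_closedBall_le {h : ℝ → ℝ} (hh : ∀ s, 0 ≤ h s) {a b x R : ℝ}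
    (hab : a ≤ b) (hR : 0 < R) (hi : IntegrableOn h (closedBall x R)) :
    ∫ s in a..b, (closedBall x R).indicator h s ≤ 2 * R * ⨍ s in closedBall x R, h s := by
  rw [intervalIntegral.integral_of_le hab]
  calc ∫ s in Ioc a b, (closedBall x R).indicator h s
      ≤ ∫ s, (closedBall x R).indicator h s :=
        setIntegral_le_integral (hi.integrable_indicator measurableSet_closedBall)
          (Eventually.of_forall (indicator_nonneg fun s _ => hh s))
    _ = 2 * R * ⨍ s in closedBall x R, h s := by
        rw [integral_indicator measurableSet_closedBall, setAverage_eq, measureReal_def,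
          Real.volume_closedBall, ENNReal.toReal_ofReal (by positivity), smul_eq_mul,
          mul_inv_cancel_left₀ (by positivity)]

variable {F : Type*} [NormedAddCommGroup F] [NormedSpace ℂ F] {f : ℂ → F} {L : F} {C x : ℝ}

lemma norm_integral_poissonKernel_smul_sub_le
    (hfm : AEStronglyMeasurable fun θ : ℝ => f (circleMap 0 1 θ))
    (hfC : ∀ᵐ θ : ℝ, ‖f (circleMap 0 1 θ) - L‖ ≤ C) {c : ℝ} (hc : 0 < c) (hc1 : c ≤ 1) {t : ℂ}
    (ht : t ∈ ball (0 : ℂ) 1) (hct : c * ‖circleMap 0 1 x - t‖ ≤ 1 - ‖t‖) {R : ℝ} (hR : 0 < R) :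
    ‖∫ s in (x - π)..(x + π), poissonKernel 0 t (circleMap 0 1 s) • (f (circleMap 0 1 s) - L)‖ ≤
      2 / (c ^ 2 * ‖circleMap 0 1 x - t‖) *
        (2 * R * ⨍ s in closedBall x R, ‖f (circleMap 0 1 s) - L‖) +
      4 * π ^ 2 * ‖circleMap 0 1 x - t‖ / c ^ 2 * C * (R⁻¹ * π) := by
  have hπ : x - π ≤ x + π := by linarith [Real.pi_pos]
  have hC0 : 0 ≤ C := hfC.exists.elim fun _ hθ => (norm_nonneg _).trans hθ
  set h : ℝ → ℝ := fun s => ‖f (circleMap 0 1 s) - L‖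
  have hball : IntegrableOn h (closedBall x R) :=
    Measure.integrableOn_of_bounded measure_closedBall_lt_top.ne
      (hfm.sub aestronglyMeasurable_const).norm (ae_restrict_of_ae (by simpa [h] using hfC))
  have hi₁ : IntervalIntegrable ((closedBall x R).indicator h) volume (x - π) (x + π) :=
    (hball.integrable_indicator measurableSet_closedBall).intervalIntegrable
  have hi₂ : IntervalIntegrable (fun s => (R ^ 2 + (s - x) ^ 2)⁻¹) volume (x - π) (x + π) :=
    (Continuous.inv₀ (by fun_prop) fun s => by positivity).intervalIntegrable _ _
  refine (intervalIntegral.norm_integral_le_of_norm_le hπ (g := fun s =>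
    2 / (c ^ 2 * ‖circleMap 0 1 x - t‖) * (closedBall x R).indicator h s +
      4 * π ^ 2 * ‖circleMap 0 1 x - t‖ / c ^ 2 * C * (R ^ 2 + (s - x) ^ 2)⁻¹) ?_
    ((hi₁.const_mul _).add (hi₂.const_mul _))).trans ?_
  · filter_upwards [hfC] with s hs hsI
    rw [norm_smul, Real.norm_of_nonneg (poissonKernel_nonneg ht (by simp))]
    simpa only [indicator] using poissonKernel_mul_le hc hc1 ht hct hR
      (abs_le.2 ⟨by linarith [hsI.1], by linarith [hsI.2]⟩) (norm_nonneg _) hs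
  · rw [intervalIntegral.integral_add (hi₁.const_mul _) (hi₂.const_mul _),
      intervalIntegral.integral_const_mul, intervalIntegral.integral_const_mul]
    gcongr
    · exact integral_indicator_closedBall_le (fun _ => norm_nonneg _) hπ hR hball
    · exact integral_inv_sq_add_sub_sq_le hR _ _ _

variable [CompleteSpace F]

lemma circleAverage_poissonKernel_smul_sub (hf : CircleIntegrable f 0 1) {t : ℂ}
    (ht : t ∈ ball (0 : ℂ) 1) (L : F) (x : ℝ) :
    Real.circleAverage (poissonKernel 0 t • f) 0 1 - L = (2 * π)⁻¹ •
      ∫ s in (x - π)..(x + π), poissonKernel 0 t (circleMap 0 1 s) •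
        (f (circleMap 0 1 s) - L) := by
  have hconst : Real.circleAverage (poissonKernel 0 t • fun _ => L) 0 1 = L :=
    DiffContOnCl.circleAverage_poissonKernel_smul diffContOnCl_const ht
  nth_rw 1 [← hconst]
  rw [← Real.circleAverage_sub (circleIntegrable_poissonKernel_smul ht hf)
      (circleIntegrable_poissonKernel_smul ht (circleIntegrable_const L 0 1)), ← smul_sub,
    Real.circleAverage_eq_integral_add (x - π), intervalIntegral.integral_comp_add_right fun s =>
      (poissonKernel 0 t • (f - fun _ => L) : ℂ → F) (circleMap 0 1 s),
    zero_add, show 2 * π + (x - π) = x + π by ring]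
  rfl

lemma norm_circleAverage_poissonKernel_smul_sub_le (hf : CircleIntegrable f 0 1)
    (hfm : AEStronglyMeasurable fun θ : ℝ => f (circleMap 0 1 θ))
    (hfC : ∀ᵐ θ : ℝ, ‖f (circleMap 0 1 θ) - L‖ ≤ C) {c : ℝ} (hc : 0 < c) (hc1 : c ≤ 1) {t : ℂ}
    (ht : t ∈ ball (0 : ℂ) 1) (hct : c * ‖circleMap 0 1 x - t‖ ≤ 1 - ‖t‖) {N : ℝ} (hN : 0 < N) :
    ‖Real.circleAverage (poissonKernel 0 t • f) 0 1 - L‖ ≤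
      4 * N / c ^ 2 * (⨍ s in closedBall x (N * ‖circleMap 0 1 x - t‖),
        ‖f (circleMap 0 1 s) - L‖) + 4 * π ^ 3 * C / c ^ 2 * N⁻¹ := by
  have hd : 0 < ‖circleMap 0 1 x - t‖ :=
    (sub_pos.2 (by simpa using ht)).trans_le (one_sub_norm_le_norm_sub (by simp) t)
  have hpi : (2 * π)⁻¹ ≤ 1 := inv_le_one_of_one_le₀ (by linarith [Real.pi_gt_three])
  rw [circleAverage_poissonKernel_smul_sub hf ht L x, norm_smul,
    Real.norm_of_nonneg (by positivity)]
  refine (mul_le_of_le_one_left (norm_nonneg _) hpi).trans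
    ((norm_integral_poissonKernel_smul_sub_le hfm hfC hc hc1 ht hct (mul_pos hN hd)).trans_eq ?_)
  field_simp
  ring

lemma tendsto_circleAverage_poissonKernel_smul_stolzRegion
    (hfm : AEStronglyMeasurable fun θ : ℝ => f (circleMap 0 1 θ))
    (hfC : ∀ᵐ θ : ℝ, ‖f (circleMap 0 1 θ)‖ ≤ C)
    (hx : Tendsto (fun r => ⨍ s in closedBall x r, ‖f (circleMap 0 1 s) - L‖) (𝓝[>] 0) (𝓝 0))
    {α : ℝ} (hα0 : 0 < α) (hα : α < π / 2) :
    Tendsto (fun t => Real.circleAverage (poissonKernel 0 t • f) 0 1)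
      (𝓝[stolzRegion α (circleMap 0 1 x)] (circleMap 0 1 x)) (𝓝 L) := by
  have hcos : 0 < Real.cos α := Real.cos_pos_of_mem_Ioo ⟨by linarith, hα⟩
  have hfC' : ∀ᵐ θ : ℝ, ‖f (circleMap 0 1 θ) - L‖ ≤ C + ‖L‖ :=
    hfC.mono fun θ hθ => (norm_sub_le _ _).trans (by gcongr)
  set c := Real.cos α / 2
  set ζ := circleMap 0 1 x
  have hζ : ‖ζ‖ = 1 := by simp [ζ]
  rw [tendsto_iff_norm_sub_tendsto_zero, Metric.tendsto_nhds]
  intro ε hε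
  have htail : Tendsto (fun N : ℝ => 4 * π ^ 3 * (C + ‖L‖) / c ^ 2 * N⁻¹) atTop (𝓝 0) := by
    have := tendsto_inv_atTop_zero.const_mul (4 * π ^ 3 * (C + ‖L‖) / c ^ 2)
    rwa [mul_zero] at this
  obtain ⟨N, hN, hN0⟩ :=
    ((htail.eventually_lt_const (half_pos hε)).and (eventually_gt_atTop 0)).exists
  have hscale : Tendsto (fun t => N * ‖ζ - t‖) (𝓝[stolzRegion α ζ] ζ) (𝓝[>] 0) := by
    obtain ⟨hdist, hpos⟩ := tendsto_nhdsWithin_iff.1 (tendsto_norm_sub_stolzRegion α hζ)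
    exact tendsto_nhdsWithin_iff.2
      ⟨by simpa using hdist.const_mul N, hpos.mono fun t ht => mul_pos hN0 ht⟩
  have hmain : Tendsto (fun t => 4 * N / c ^ 2 * ⨍ s in closedBall x (N * ‖ζ - t‖),
      ‖f (circleMap 0 1 s) - L‖) (𝓝[stolzRegion α ζ] ζ) (𝓝 0) := by
    have := (hx.comp hscale).const_mul (4 * N / c ^ 2)
    rwa [mul_zero] at this
  filter_upwards [hmain.eventually_lt_const (half_pos hε), self_mem_nhdsWithin,
    eventually_mul_norm_sub_le_stolzRegion hα0 hα hζ] with t ht htS hct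
  rw [dist_zero_right, norm_norm]
  linarith [norm_circleAverage_poissonKernel_smul_sub_le (circleIntegrable_of_ae_norm_le hfm hfC)
    hfm hfC' (half_pos hcos) (by linarith [Real.cos_le_one α]) htS.1 hct hN0]

end Fatou

section DensityPoints

lemma ae_coe_angles {P : Angles → Prop} (h : ∀ᵐ x ∂angleMeasure, P x) : ∀ᵐ θ : ℝ, P θ := by
  have hv : ∀ᵐ x : Angles, P x := by
    rw [AddCircle.volume_eq_smul_haarAddCircle]
    exact Measure.ae_smul_measure h _
  have hcover : (⋃ n : ℤ, Ioc (n • (2 * π)) ((n + 1) • (2 * π))) = univ :=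
    iUnion_Ioc_zsmul Real.two_pi_pos
  rw [← Measure.restrict_univ (μ := (volume : Measure ℝ)), ← hcover, ae_restrict_iUnion_iff]
  intro n
  rw [add_smul, one_smul]
  exact (AddCircle.measurePreserving_mk (2 * π) (n • (2 * π))).quasiMeasurePreserving.ae hv

lemma volume_Ioo_inter_preimage_coe_angles {Γ : Set Angles} (hΓ : MeasurableSet Γ) :
    volume (Ioo 0 (2 * π) ∩ (fun θ : ℝ => (θ : Angles)) ⁻¹' Γ) =
      ENNReal.ofReal (2 * π) * angleMeasure Γ := by
  have h := (AddCircle.measurePreserving_mk (2 * π) 0).measure_preimage hΓ.nullMeasurableSet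
  rw [zero_add, ← restrict_Ioo_eq_restrict_Ioc,
    Measure.restrict_apply (AddCircle.measurable_mk' hΓ), inter_comm,
    AddCircle.volume_eq_smul_haarAddCircle] at h
  exact h

lemma one_sub_volume_div_lt {Γ : Set Angles} (hΓ : MeasurableSet Γ) {b : ℝ}
    (h : angleMeasure Γᶜ < ENNReal.ofReal b) :
    1 - (volume (Ioo 0 (2 * π) ∩ (fun θ : ℝ => (θ : Angles)) ⁻¹' Γ)).toReal / (2 * π) < b := by
  have hlt := (ENNReal.lt_ofReal_iff_toReal_lt (measure_ne_top _ _)).1 h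
  rw [← measureReal_def, probReal_compl_eq_one_sub hΓ] at hlt
  rwa [volume_Ioo_inter_preimage_coe_angles hΓ, ENNReal.toReal_mul,
    ENNReal.toReal_ofReal Real.two_pi_pos.le, mul_div_cancel_left₀ _ Real.two_pi_pos.ne']

lemma exists_subset_forall_density_point {S : Set ℝ} (hS : MeasurableSet S) {P : ℝ → Prop}
    (hP : ∀ᵐ θ : ℝ, P θ) :
    ∃ T ⊆ S, MeasurableSet T ∧ volume T = volume S ∧ ∀ θ ∈ T, P θ ∧
      Tendsto (fun r : ℝ => volume (T ∩ Icc (θ - r) (θ + r)) / ENNReal.ofReal (2 * r))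
        (𝓝[>] 0) (𝓝 1) := by
  have hgood := hP.and (Besicovitch.ae_tendsto_measure_inter_div_of_measurableSet volume hS)
  set N := toMeasurable volume {θ : ℝ | ¬ (P θ ∧ Tendsto (fun r => volume (S ∩ closedBall θ r) /
    volume (closedBall θ r)) (𝓝[>] 0) (𝓝 (S.indicator 1 θ)))}
  have hN : volume N = 0 := (measure_toMeasurable _).trans hgood
  have hTS (B : Set ℝ) : volume ((S \ N) ∩ B) = volume (S ∩ B) := by
    rw [← inter_sdiff_right_comm, measure_sdiff_null hN]
  refine ⟨S \ N, sdiff_subset, hS.diff (measurableSet_toMeasurable _ _), measure_sdiff_null hN,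
    fun θ hθ => ?_⟩
  obtain ⟨hPθ, hd⟩ := not_not.1 fun h => hθ.2 (subset_toMeasurable _ _ h)
  rw [indicator_of_mem hθ.1, Pi.one_apply] at hd
  simp_rw [hTS]
  simp_rw [Real.volume_closedBall, Real.closedBall_eq_Icc] at hd
  exact ⟨hPθ, hd⟩

lemma ae_tendsto_average_closedBall_norm_sub {E : Type*} [NormedAddCommGroup E] {g : ℝ → E}
    {C : ℝ} (hgm : AEStronglyMeasurable g) (hgC : ∀ᵐ θ, ‖g θ‖ ≤ C) :
    ∀ᵐ θ, Tendsto (fun r => ⨍ s in closedBall θ r, ‖g s - g θ‖) (𝓝[>] 0) (𝓝 0) := by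
  have hg : LocallyIntegrable g := locallyIntegrable_iff.2 fun K hK =>
    Measure.integrableOn_of_bounded hK.measure_lt_top.ne hgm (ae_restrict_of_ae hgC)
  filter_upwards [(Besicovitch.vitaliFamily volume).ae_tendsto_average_norm_sub hg] with θ hθ
  exact hθ.comp (Besicovitch.tendsto_filterAt volume θ)

end DensityPoints

section Construction

/-- `A` is a locally pluriregular subset of `closure D`. The inclusion is part of the notion since
at a point outside `closure D` all approach regions are eventually empty, so that the real `limsup`
has the junk value `0` there and `PlrgAtA` carries no information. -/
structure IsLocallyPluriregular (𝒜 : ApproachData M) (A D : Set M) : Prop where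
  subset_closure : A ⊆ closure D
  plrgAtA : ∀ a ∈ A, PlrgAtA (H := H) 𝒜 A D a

variable {F : Type*} [NormedAddCommGroup F] [NormedSpace ℂ F] [CompleteSpace F]

theorem exists_tendstoLocallyUniformlyOn_angularLimit {Φ : ℕ → ℂ → F} {f : ℂ → F} {C : ℝ}
    (hΦ : ∀ k, Differentiable ℂ (Φ k)) (hC : ∀ k z, ‖z‖ = 1 → ‖Φ k z‖ ≤ C)
    (hf : ∀ᵐ θ : ℝ, Tendsto (fun k => Φ k (circleMap 0 1 θ)) atTop (𝓝 (f (circleMap 0 1 θ)))) :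
    ∃ φ : ℂ → F, TendstoLocallyUniformlyOn Φ φ atTop (ball 0 1) ∧
      ∀ᵐ θ : ℝ, ∀ α : ℝ, 0 < α → α < π / 2 →
        Tendsto φ (𝓝[stolzRegion α (circleMap 0 1 θ)] (circleMap 0 1 θ))
          (𝓝 (f (circleMap 0 1 θ))) := by
  have hc : ∀ k, Continuous (Φ k) := fun k => (hΦ k).continuous
  have hfm : AEStronglyMeasurable fun θ : ℝ => f (circleMap 0 1 θ) :=
    aestronglyMeasurable_of_tendsto_ae atTop
      (fun k => ((hc k).comp (continuous_circleMap 0 1)).aestronglyMeasurable) hf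
  have hfC : ∀ᵐ θ : ℝ, ‖f (circleMap 0 1 θ)‖ ≤ C :=
    ae_norm_le_of_ae_tendsto (fun k θ => hC k (circleMap 0 1 θ) (by simp)) hf
  refine ⟨fun t => Real.circleAverage (poissonKernel 0 t • f) 0 1,
    tendstoLocallyUniformlyOn_circleAverage_poissonKernel_smul hΦ
      (circleIntegrable_of_ae_norm_le hfm hfC) (tendsto_circleAverage_norm_sub hc hC hfm hfC hf),
    ?_⟩
  filter_upwards [ae_tendsto_average_closedBall_norm_sub hfm hfC] with θ hθ α hα0 hα
  exact tendsto_circleAverage_poissonKernel_smul_stolzRegion hfm hfC hθ hα0 hα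

lemma exists_holomorphic_angularLimit {D B : Set F} (hDb : Bornology.IsBounded D) {z : F}
    {Φ : ℕ → ℂ → F} (hΦ : ∀ k, IsEntireDisc D z (Φ k)) {Γ : Set Angles}
    (hlim : ∀ᵐ x ∂angleMeasure, ∃ L, Tendsto (fun k => Φ k x.toCircle) atTop (𝓝 L) ∧
      (x ∈ Γ → L ∈ B)) :
    ∃ φ : ℂ → F, DifferentiableOn ℂ φ (ball 0 1) ∧ φ 0 = z ∧ φ '' ball 0 1 ⊆ closure D ∧
      ∀ᵐ θ : ℝ, (θ : Angles) ∈ Γ → ∃ L ∈ B, ∀ α : ℝ, 0 < α → α < π / 2 →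
        Tendsto φ (𝓝[stolzRegion α (exp (θ * I))] (exp (θ * I))) (𝓝 L) := by
  obtain ⟨C, hC⟩ := hDb.exists_norm_le
  have hf : ∀ᵐ θ : ℝ, ∃ L, Tendsto (fun k => Φ k (circleMap 0 1 θ)) atTop (𝓝 L) ∧
      ((θ : Angles) ∈ Γ → L ∈ B) := by
    filter_upwards [ae_coe_angles hlim] with θ hθ
    rwa [toCircle_coe_angle] at hθ
  obtain ⟨φ, hφ, hang⟩ := exists_tendstoLocallyUniformlyOn_angularLimit
    (f := fun z => limUnder atTop fun k => Φ k z) (fun k => (hΦ k).differentiable)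
    (fun k z hz => hC _ ((hΦ k).mapsTo (by simp [hz])))
    (hf.mono fun θ ⟨L, hL, _⟩ => tendsto_nhds_limUnder ⟨L, hL⟩)
  have hdiff : ∀ᶠ k in atTop, DifferentiableOn ℂ (Φ k) (ball 0 1) :=
    .of_forall fun k => (hΦ k).differentiable.differentiableOn
  refine ⟨φ, hφ.differentiableOn hdiff isOpen_ball, ?_, ?_, ?_⟩
  · refine tendsto_nhds_unique (hφ.tendsto_at (mem_ball_self one_pos)) ?_
    simp only [(hΦ _).map_zero, tendsto_const_nhds]
  · rintro _ ⟨t, ht, rfl⟩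
    exact isClosed_closure.mem_of_tendsto (hφ.tendsto_at ht)
      (Eventually.of_forall fun k => subset_closure ((hΦ k).mapsTo (ball_subset_closedBall ht)))
  · filter_upwards [hf, hang] with θ ⟨L, hL, hLB⟩ hθ hΓ
    rw [hL.limUnder_eq] at hθ
    exact ⟨L, hLB hΓ, by simpa [circleMap] using hθ⟩

theorem poletsky_disc_construction_general {D A : Set F} (hD : IsOpen D)
    (hDb : Bornology.IsBounded D) {𝒜 : ApproachData F} (h𝒜 : IsApproachSystem D 𝒜)
    (hA : IsLocallyPluriregular (H := F) 𝒜 A D) {z₀ : F} (hz₀ : z₀ ∈ D) {ε : ℝ} (hε : 0 < ε) :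
    ∃ φ : ℂ → F, ∃ Γ₀ : Set ℝ, MeasurableSet Γ₀ ∧ Γ₀ ⊆ Ico 0 (2 * π) ∧
      DifferentiableOn ℂ φ (ball 0 1) ∧ Bornology.IsBounded (φ '' ball 0 1) ∧
      (∀ θ ∈ Γ₀, Tendsto (fun r : ℝ => volume (Γ₀ ∩ Icc (θ - r) (θ + r)) / ENNReal.ofReal (2 * r))
        (𝓝[>] 0) (𝓝 1)) ∧
      φ 0 = z₀ ∧ φ '' ball 0 1 ⊆ closure D ∧
      (∀ θ ∈ Γ₀, ∃ L ∈ closure A, ∀ α : ℝ, 0 < α → α < π / 2 →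
        Tendsto φ (𝓝[stolzRegion α (exp (θ * I))] (exp (θ * I))) (𝓝 L)) ∧
      1 - (volume Γ₀).toReal / (2 * π) < omegaA (H := F) 𝒜 A D z₀ + ε := by
  obtain ⟨Φ, Γ, hΓ, hΦ, hlim, hmeas⟩ :=
    exists_convergent_isEntireDisc hD h𝒜 hA.plrgAtA hz₀ hε
  obtain ⟨φ, hφ, hφ0, hφD, hang⟩ := exists_holomorphic_angularLimit hDb hΦ hlim
  obtain ⟨Γ₀, hsub, hΓ₀, hvol, hdens⟩ := exists_subset_forall_density_point
    (measurableSet_Ioo.inter (AddCircle.measurable_mk' hΓ.measurableSet)) hang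
  refine ⟨φ, Γ₀, hΓ₀, fun θ hθ => Ioo_subset_Ico_self (hsub hθ).1, hφ, hDb.closure.subset hφD,
    fun θ hθ => (hdens θ hθ).2, hφ0, hφD, fun θ hθ => (hdens θ hθ).1 (hsub hθ).2, ?_⟩
  rw [hvol]
  exact one_sub_volume_div_lt hΓ.measurableSet hmeas

end Construction

/-- Poletsky-type disc construction, existence of
`ε`-candidates: given a bounded open `D ⊆ ℂⁿ` with a system of approach
regions, a nonempty locally pluriregular `A ⊆ D̄` with `ω(·,A,D) < 1` on `D`,
a point `z₀ ∈ D` and `ε > 0`, there is a bounded holomorphic disc through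
`z₀` with image in `D̄` whose angular boundary values lie in `Ā` on a set
`Γ₀` of angles, all of whose points are density points, with
`1 − mes Γ₀ / 2π < ω(z₀,A,D) + ε`. -/
theorem poletsky_disc_construction
    {n : ℕ} (D : Set (Fin n → ℂ)) (hDo : IsOpen D)
    (hDb : Bornology.IsBounded D)
    (𝒜 : ApproachData (Fin n → ℂ)) (h𝒜 : IsApproachSystem D 𝒜)
    (A : Set (Fin n → ℂ)) (hAne : A.Nonempty) (hAD : A ⊆ closure D)
    (hreg : ∀ a ∈ A, PlrgAtA (H := Fin n → ℂ) 𝒜 A D a)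
    (homega : ∀ z ∈ D, omegaA (H := Fin n → ℂ) 𝒜 A D z < 1)
    (z₀ : Fin n → ℂ) (hz₀ : z₀ ∈ D) (ε : ℝ) (hε : 0 < ε) :
    ∃ φ : ℂ → (Fin n → ℂ), ∃ Γ₀ : Set ℝ,
      MeasurableSet Γ₀ ∧ Γ₀ ⊆ Set.Ico (0:ℝ) (2 * Real.pi) ∧
      DifferentiableOn ℂ φ (ball (0:ℂ) 1) ∧
      Bornology.IsBounded (φ '' ball (0:ℂ) 1) ∧
      (∀ θ ∈ Γ₀, Filter.Tendsto
        (fun r : ℝ => MeasureTheory.volume (Γ₀ ∩ Set.Icc (θ - r) (θ + r)) /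
          ENNReal.ofReal (2 * r)) (𝓝[>] (0:ℝ)) (𝓝 1)) ∧
      φ 0 = z₀ ∧
      φ '' ball (0:ℂ) 1 ⊆ closure D ∧
      (∀ θ ∈ Γ₀, ∃ L ∈ closure A, ∀ α : ℝ, 0 < α → α < Real.pi / 2 →
        Filter.Tendsto φ
          (𝓝[stolzRegion α (Complex.exp (θ * Complex.I))]
            (Complex.exp (θ * Complex.I))) (𝓝 L)) ∧
      1 - (MeasureTheory.volume Γ₀).toReal / (2 * Real.pi) <
        omegaA (H := Fin n → ℂ) 𝒜 A D z₀ + ε :=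
  poletsky_disc_construction_general hDo hDb h𝒜 ⟨hAD, hreg⟩ hz₀ hε

end
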